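/- arXiv:1602.02202 — 9 statements merged into one kernel-verified Lean document; each statement's English description precedes it below -/
import Mathlib

section
/- For any online learning algorithm (i.e., any strategy that on each round t = 1,...,T outputs a weight vector w_t ∈ R^d as a function of the previously observed examples and losses), for any d ≥ 1, any constants C > 0 and L > 0, and any T ≥ d that is a multiple of d, there exists a sequence of examples x_1,...,x_T ∈ R^d and convex differentiable loss functions ℓ_1,...,ℓ_T : R → R satisfying the Scalar Lipschitz assumption (|ℓ_t′(z)| ≤ L whenever |z| ≤ C) such that the regret R_T = sup_{w ∈ K} Σ_{t=1}^T ℓ_t(w_t^⊤ x_t) − Σ_{t=1}^T ℓ_t(w^⊤ x_t) is at least C·L·√(dT/2). -/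
open Matrix Finset

namespace LB

noncomputable def V : ℕ → ℤ → ℝ
  | 0, s => |(s : ℝ)|
  | n + 1, s => (V n (s + 1) + V n (s - 1)) / 2

noncomputable def p : ℕ → ℤ → ℝ
  | 0, s => if s = 0 then 1 else 0
  | n + 1, s => (p n (s + 1) + p n (s - 1)) / 2

lemma p_nonneg (n : ℕ) : ∀ s, 0 ≤ p n s := by
  induction n with
  | zero => intro s; unfold p; split_ifs <;> norm_num
  | succ n ih => intro s; unfold p; have := ih (s+1); have := ih (s-1); linarith

lemma V_succ (n : ℕ) : ∀ s, V (n + 1) s = V n s + p n s := by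
  induction n with
  | zero =>
    intro s
    simp only [V, p]
    push_cast
    rcases lt_trichotomy s 0 with h | h | h
    · have h1 : (s : ℝ) ≤ -1 := by exact_mod_cast (by omega : s ≤ -1)
      rw [abs_of_nonpos (by linarith), abs_of_nonpos (by linarith), abs_of_nonpos (by linarith),
        if_neg h.ne]
      ring
    · subst h; norm_num
    · have h1 : (1 : ℝ) ≤ s := by exact_mod_cast (by omega : 1 ≤ s)
      rw [abs_of_nonneg (by linarith), abs_of_nonneg (by linarith), abs_of_nonneg (by linarith),
        if_neg h.ne']
      ring
  | succ n ih =>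
    intro s
    rw [V, ih, ih]
    conv_rhs => rw [V, p]
    ring

lemma p_ge (n : ℕ) : ∀ j : ℕ, (n.choose j : ℝ) / 2 ^ n ≤ p n (2 * j - n) := by
  induction n with
  | zero =>
    intro j
    cases j with
    | zero => simp [p]
    | succ j => simpa using p_nonneg 0 _
  | succ n ih =>
    intro j
    rw [p]
    have e : (2 * (j : ℤ) - ((n + 1 : ℕ) : ℤ) + 1) = 2 * j - n := by push_cast; ring
    rw [e]
    have h1 := ih j
    cases j with
    | zero =>
      have h2 := p_nonneg n (2 * ((0 : ℕ) : ℤ) - ((n + 1 : ℕ) : ℤ) - 1)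
      simp only [Nat.choose_zero_right, pow_succ] at h1 ⊢
      rw [← div_div]
      generalize p n (2 * ((0 : ℕ) : ℤ) - ((n + 1 : ℕ) : ℤ) - 1) = a at h2 ⊢
      generalize p n (2 * ((0 : ℕ) : ℤ) - (n : ℤ)) = b at h1 ⊢
      generalize ((1 : ℕ) : ℝ) / 2 ^ n = c at h1 ⊢
      linarith
    | succ j =>
      have h2 := ih j
      have e : (2 * ((j + 1 : ℕ) : ℤ) - ((n + 1 : ℕ) : ℤ) - 1) = 2 * j - n := by push_cast; ring
      rw [e, Nat.choose_succ_succ', pow_succ, ← div_div]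
      push_cast at h1 h2 ⊢
      rw [add_div]
      linarith

noncomputable def g (k : ℕ) : ℝ := (k.centralBinom : ℝ) / 4 ^ k

lemma g_succ (k : ℕ) : 2 * ((k : ℝ) + 1) * g (k + 1) = (2 * k + 1) * g k := by
  have h := Nat.succ_mul_centralBinom_succ k
  have h' : ((k : ℝ) + 1) * ((k + 1).centralBinom : ℝ) = 2 * (2 * k + 1) * k.centralBinom := by
    exact_mod_cast h
  unfold g
  rw [pow_succ]
  field_simp
  linarith

lemma g_pos (k : ℕ) : 0 < g k := by
  unfold g
  have := k.centralBinom_pos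
  positivity

lemma g_sq (k : ℕ) : (k : ℝ) + 1 ≤ (2 * ((k : ℝ) + 1) * g (k + 1)) ^ 2 := by
  induction k with
  | zero => rw [g_succ]; simp [g]
  | succ k ih =>
    rw [g_succ]
    push_cast
    set x := g (k + 1)
    have hk : (0 : ℝ) ≤ k := by positivity
    have h1 : 1 ≤ 4 * ((k : ℝ) + 1) * x ^ 2 := by
      have : (0 : ℝ) < k + 1 := by positivity
      nlinarith
    have : (2 * ((k : ℝ) + 1) + 1) ^ 2 * x ^ 2 ≥ 4 * (k + 1) * x ^ 2 * (k + 2) := by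
      nlinarith [sq_nonneg x]
    nlinarith

lemma p_even (k : ℕ) : g k ≤ p (2 * k) 0 := by
  have h := p_ge (2 * k) k
  have e : (2 * (k : ℤ) - ((2 * k : ℕ) : ℤ)) = 0 := by push_cast; ring
  rw [e, pow_mul] at h
  unfold g Nat.centralBinom
  norm_num at h ⊢
  exact h

lemma V_mono (n : ℕ) (s : ℤ) : V n s ≤ V (n + 1) s := by
  rw [V_succ]; have := p_nonneg n s; linarith

lemma V_even (k : ℕ) : 2 * (k : ℝ) * g k ≤ V (2 * k) 0 := by
  induction k with
  | zero => simp [V]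
  | succ k ih =>
    have h1 := V_mono (2 * k + 1) 0
    rw [V_succ (2 * k)] at h1
    have h2 := p_even k
    have h3 := g_succ k
    push_cast
    rw [h3]
    have : 2 * (k + 1) = 2 * k + 1 + 1 := by ring
    rw [this]
    linarith

lemma V_odd (k : ℕ) : 2 * ((k : ℝ) + 1) * g (k + 1) ≤ V (2 * k + 1) 0 := by
  rw [V_succ, g_succ]
  have h2 := p_even k
  have h3 := V_even k
  linarith

lemma V_bound (n : ℕ) : Real.sqrt (n / 2) ≤ V n 0 := by
  rcases Nat.even_or_odd' n with ⟨k, rfl | rfl⟩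
  · cases k with
    | zero => simp [V]
    | succ k =>
      refine le_trans ?_ (V_even (k + 1))
      have := g_pos (k + 1)
      apply Real.sqrt_le_iff.2 ⟨by positivity, ?_⟩
      have := g_sq k
      push_cast
      linarith
  · refine le_trans ?_ (V_odd k)
    have := g_pos (k + 1)
    apply Real.sqrt_le_iff.2 ⟨by positivity, ?_⟩
    have := g_sq k
    push_cast
    linarith

def cnt {d : ℕ} (J : ℕ → Fin d) (T t : ℕ) (j : Fin d) : ℕ := #{u ∈ Ico t T | J u = j}

def S {d : ℕ} (J : ℕ → Fin d) (ε : ℕ → ℤ) (t : ℕ) (j : Fin d) : ℤ :=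
  ∑ u ∈ range t, if J u = j then ε u else 0

lemma cnt_step {d : ℕ} (J : ℕ → Fin d) {T t : ℕ} (h : t < T) (j : Fin d) :
    cnt J T t j = cnt J T (t + 1) j + if J t = j then 1 else 0 := by
  unfold cnt
  rw [← Finset.insert_Ico_add_one_left_eq_Ico h, Finset.filter_insert]
  split_ifs with h
  · rw [Finset.card_insert_of_notMem (by simp)]
  · rfl

lemma adversary {d : ℕ} (J : ℕ → Fin d) (T : ℕ) (C : ℝ) (z : ℕ → (ℕ → ℤ) → ℝ)
    (hz : ∀ t ε ε', (∀ u < t, ε u = ε' u) → z t ε = z t ε') (t : ℕ) (ht : t ≤ T) :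
    ∃ ε : ℕ → ℤ, (∀ u, ε u = 1 ∨ ε u = -1) ∧
      C * ∑ j, V (cnt J T 0 j) 0 ≤
        ∑ u ∈ range t, (ε u : ℝ) * z u ε + C * ∑ j, V (cnt J T t j) (S J ε t j) := by
  induction t with
  | zero => exact ⟨fun _ => 1, by simp, by simp [S]⟩
  | succ t ih =>
    obtain ⟨ε, h1, h2⟩ := ih (by omega)
    have key : ∀ e : ℤ, 
        ∑ u ∈ range (t + 1), (Function.update ε t e u : ℝ) * z u (Function.update ε t e) +
          C * ∑ j, V (cnt J T (t + 1) j) (S J (Function.update ε t e) (t + 1) j)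
        = ∑ u ∈ range t, (ε u : ℝ) * z u ε + e * z t ε +
          C * ∑ j, V (cnt J T (t + 1) j) (S J ε t j + if J t = j then e else 0) := by
      intro e
      have hlt : ∀ u < t, Function.update ε t e u = ε u := fun u hu => by
        rw [Function.update_of_ne (by omega)]
      rw [Finset.sum_range_succ]
      congr 2
      · apply Finset.sum_congr rfl
        intro u hu
        have hu := Finset.mem_range.1 hu
        rw [hlt u hu, hz u _ ε (fun v hv => hlt v (by omega))]
      · rw [hz t _ ε hlt]; simp
      · apply Finset.sum_congr rfl
        intro j _
        congr 1
        unfold S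
        rw [Finset.sum_range_succ]
        congr 1
        · apply Finset.sum_congr rfl
          intro u hu
          rw [hlt u (Finset.mem_range.1 hu)]
        · simp
    have avg : ∑ j, V (cnt J T t j) (S J ε t j) =
        (∑ j, V (cnt J T (t + 1) j) (S J ε t j + if J t = j then 1 else 0) +
         ∑ j, V (cnt J T (t + 1) j) (S J ε t j + if J t = j then -1 else 0)) / 2 := by
      rw [← Finset.sum_add_distrib, Finset.sum_div]
      apply Finset.sum_congr rfl
      intro j _
      rw [cnt_step J (by omega : t < T)]
      split_ifs
      · rw [V]; rfl
      · simp
    have k1 := key 1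
    have k2 := key (-1)
    rw [avg] at h2
    have hor : ∀ e : ℤ, (e = 1 ∨ e = -1) →
        ∀ u, Function.update ε t e u = 1 ∨ Function.update ε t e u = -1 := by
      intro e he u
      by_cases hu : u = t
      · subst hu; simpa using he
      · rw [Function.update_of_ne hu]; exact h1 u
    by_contra! hcon
    have c1 := hcon _ (hor 1 (Or.inl rfl))
    have c2 := hcon _ (hor (-1) (Or.inr rfl))
    rw [k1] at c1
    rw [k2] at c2
    push_cast at c1 c2
    linarith

lemma cnt_mod (d n : ℕ) (hd : 0 < d) (j : Fin d) :
    cnt (fun t => (⟨t % d, Nat.mod_lt t hd⟩ : Fin d)) (d * n) 0 j = n := by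
  unfold cnt
  induction n with
  | zero => simp
  | succ n ih =>
    rw [← Finset.Ico_union_Ico_eq_Ico (Nat.zero_le (d * n)) (by rw [mul_add]; omega : d * n ≤ d * (n + 1)),
      Finset.filter_union, Finset.card_union_of_disjoint, ih]
    · congr 1
      rw [Finset.card_eq_one]
      refine ⟨d * n + j, ?_⟩
      ext u
      simp only [Finset.mem_filter, Finset.mem_Ico, Finset.mem_singleton, Fin.ext_iff]
      constructor
      · rintro ⟨⟨h1, h2⟩, h3⟩
        obtain ⟨v, rfl⟩ := Nat.exists_eq_add_of_le h1
        rw [mul_add] at h2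
        rw [Nat.mul_add_mod, Nat.mod_eq_of_lt (by omega)] at h3
        omega
      · rintro rfl
        have := j.2
        refine ⟨⟨by omega, by rw [mul_add]; omega⟩, ?_⟩
        rw [Nat.mul_add_mod, Nat.mod_eq_of_lt this]
    · apply Finset.disjoint_filter_filter
      exact Finset.Ico_disjoint_Ico_consecutive _ _ _

end LB


/-- **Lower bound (Theorem 1).** For any online learning algorithm (a strategy `alg`
mapping the history of examples and losses to a weight vector), any `d ≥ 1`, constants
`C, L > 0` and any `T ≥ d` that is a multiple of `d`, there is a sequence of examples
and convex differentiable scalar-Lipschitz losses on which the regret against the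
comparator set `K = {w | ∀ t, |wᵀ xₜ| ≤ C}` is at least `C·L·√(dT/2)`. -/
theorem lower_bound
    (d T : ℕ) (hd : 1 ≤ d) (hT : d ≤ T) (hdvd : d ∣ T)
    (C L : ℝ) (hC : 0 < C) (hL : 0 < L)
    (alg : ∀ t : ℕ, (Fin t → (Fin d → ℝ)) → (Fin t → (ℝ → ℝ)) → (Fin d → ℝ)) :
    ∃ (x : ℕ → Fin d → ℝ) (ℓ : ℕ → ℝ → ℝ),
      (∀ t < T, ConvexOn ℝ Set.univ (ℓ t)) ∧
      (∀ t < T, Differentiable ℝ (ℓ t)) ∧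
      (∀ t < T, ∀ z : ℝ, |z| ≤ C → |deriv (ℓ t) z| ≤ L) ∧
      C * L * Real.sqrt (d * T / 2) ≤
        sSup { r : ℝ | ∃ w : Fin d → ℝ,
          (∀ t < T, |w ⬝ᵥ x t| ≤ C) ∧
          r = ∑ t ∈ Finset.range T,
              (ℓ t ((alg t (fun s : Fin t => x s.1) (fun s : Fin t => ℓ s.1)) ⬝ᵥ x t)
                - ℓ t (w ⬝ᵥ x t)) } := by
  obtain ⟨n, rfl⟩ := hdvd
  set J : ℕ → Fin d := fun t => ⟨t % d, Nat.mod_lt t hd⟩ with hJ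
  set x : ℕ → Fin d → ℝ := fun t => Pi.single (J t) 1 with hx
  obtain ⟨ε, hε, hreg⟩ := LB.adversary J (d * n) C
    (fun t ε => (alg t (fun s : Fin t => x s.1) (fun s : Fin t => fun y => L * ε s.1 * y)) ⬝ᵥ x t)
    (by
      intro t ε ε' h
      have : (fun s : Fin t => fun y : ℝ => L * ε s.1 * y) =
          (fun s : Fin t => fun y : ℝ => L * ε' s.1 * y) := by
        funext s y
        rw [h s.1 s.2]
      simp only [this]) (d * n) le_rfl
  have habs : ∀ t, |L * (ε t : ℝ)| = L := by
    intro t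
    rcases hε t with h | h <;> simp [h, abs_of_pos hL]
  refine ⟨x, fun t y => L * ε t * y, ?_, ?_, ?_, ?_⟩
  · intro t _
    exact (LinearMap.mul ℝ ℝ (L * ε t)).convexOn convex_univ
  · intro t _
    fun_prop
  · intro t _ z _
    have : deriv (fun y : ℝ => L * ε t * y) z = L * ε t := by
      simpa using ((hasDerivAt_id z).const_mul (L * (ε t : ℝ))).deriv
    rw [this, habs]
  · set z : ℕ → ℝ := fun t => (alg t (fun s : Fin t => x s.1)
      (fun s : Fin t => fun y => L * ε s.1 * y)) ⬝ᵥ x t with hz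
    set w : Fin d → ℝ := fun j => if 0 ≤ LB.S J ε (d * n) j then -C else C with hw
    have hwS : ∑ t ∈ range (d * n), (ε t : ℝ) * (w ⬝ᵥ x t)
        = - (C * ∑ j, |(LB.S J ε (d * n) j : ℝ)|) := by
      have : ∀ t, (ε t : ℝ) * (w ⬝ᵥ x t) = ∑ j, w j * (if J t = j then (ε t : ℝ) else 0) := by
        intro t
        simp [hx, mul_comm]
      simp only [this]
      rw [Finset.sum_comm, Finset.mul_sum, ← Finset.sum_neg_distrib]
      apply Finset.sum_congr rfl
      intro j _
      rw [← Finset.mul_sum]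
      have e : ∑ t ∈ range (d * n), (if J t = j then (ε t : ℝ) else 0)
          = (LB.S J ε (d * n) j : ℝ) := by
        unfold LB.S; push_cast; rfl
      rw [e]
      simp only [hw]
      split_ifs with h
      · rw [abs_of_nonneg (by exact_mod_cast h)]; ring
      · rw [abs_of_neg (by exact_mod_cast not_le.1 h)]; ring
    have hV : ∀ j, LB.V (LB.cnt J (d * n) (d * n) j) (LB.S J ε (d * n) j)
        = |(LB.S J ε (d * n) j : ℝ)| := by
      intro j
      simp [LB.cnt, LB.V]
    have hV0 : ∀ j, LB.cnt J (d * n) 0 j = n := LB.cnt_mod d n hd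
    simp only [hV, hV0] at hreg
    rw [Finset.sum_const, Finset.card_univ, Fintype.card_fin, nsmul_eq_mul] at hreg
    have hsq : Real.sqrt (d * ((d * n : ℕ) : ℝ) / 2) = d * Real.sqrt (n / 2) := by
      have : (d : ℝ) * ((d * n : ℕ) : ℝ) / 2 = (d : ℝ) ^ 2 * (n / 2) := by push_cast; ring
      rw [this, Real.sqrt_mul (by positivity), Real.sqrt_sq (by positivity)]
    refine le_trans ?_ (le_csSup ?_ ⟨w, ?_, rfl⟩)
    · have e : ∑ t ∈ range (d * n), (L * ε t * z t - L * ε t * (w ⬝ᵥ x t))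
          = L * (∑ t ∈ range (d * n), (ε t : ℝ) * z t
              - ∑ t ∈ range (d * n), (ε t : ℝ) * (w ⬝ᵥ x t)) := by
        rw [← Finset.sum_sub_distrib, Finset.mul_sum]
        apply Finset.sum_congr rfl
        intro t _
        ring
      refine le_of_le_of_eq ?_ e.symm
      rw [hwS, hsq]
      have hb := LB.V_bound n
      have h1 : C * (d * Real.sqrt (n / 2)) ≤ C * (d * LB.V n 0) := by gcongr
      calc C * L * (d * Real.sqrt (n / 2)) = L * (C * (d * Real.sqrt (n / 2))) := by ring
        _ ≤ _ := by
          apply mul_le_mul_of_nonneg_left _ hL.le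
          linarith
    · refine ⟨∑ t ∈ range (d * n), (L * ε t * z t + L * C), ?_⟩
      rintro r ⟨v, hv, rfl⟩
      apply Finset.sum_le_sum
      intro t ht
      have h1 := hv t (Finset.mem_range.1 ht)
      have h2 : |L * ε t * (v ⬝ᵥ x t)| ≤ L * C := by
        rw [abs_mul, habs]; gcongr
      have := (abs_le.1 h2).1
      simp only [hz]
      linarith
    · intro t _
      simp only [hx, dotProduct_single, mul_one, hw]
      split_ifs <;> simp [abs_of_pos hC]
end

section
/- Let x ∈ R^d with x ≠ 0, u ∈ R^d, C > 0, and let A ∈ R^{d×d} be a symmetric positive definite matrix. Then the unique minimizer of ‖w − u‖_A over the set {w ∈ R^d : |w^⊤ x| ≤ C} is w* = u − (τ_C(u^⊤ x) / (x^⊤ A^{−1} x)) · A^{−1} x, where τ_C(y) = sgn(y)·max{|y| − C, 0} and sgn(a) = 1 if a ≥ 0 and −1 otherwise. -/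
open Matrix

/-- `τ_C(y) = sgn(y) · max(|y| - C, 0)`, where `sgn(a) = 1` if `a ≥ 0` and `-1` otherwise. -/
noncomputable def tauC (C y : ℝ) : ℝ := (if 0 ≤ y then (1 : ℝ) else -1) * max (|y| - C) 0

/-- **Projection lemma (Lemma 2).** For `x ≠ 0`, `u ∈ ℝ^d`, `C > 0` and a symmetric positive
definite `A`, the unique minimizer of `‖w - u‖_A = √((w-u)ᵀ A (w-u))` over
`{w : |wᵀx| ≤ C}` is `w* = u - (τ_C(uᵀx) / (xᵀ A⁻¹ x)) • A⁻¹ x`. -/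
theorem projection_closed_form
    (d : ℕ) (x u : Fin d → ℝ) (hx : x ≠ 0) (C : ℝ) (hC : 0 < C)
    (A : Matrix (Fin d) (Fin d) ℝ) (hA : A.PosDef)
    (wstar : Fin d → ℝ)
    (hws : wstar = u - (tauC C (u ⬝ᵥ x) / (x ⬝ᵥ A⁻¹.mulVec x)) • A⁻¹.mulVec x) :
    |wstar ⬝ᵥ x| ≤ C ∧
    (∀ w : Fin d → ℝ, |w ⬝ᵥ x| ≤ C →
      Real.sqrt ((wstar - u) ⬝ᵥ A.mulVec (wstar - u)) ≤
        Real.sqrt ((w - u) ⬝ᵥ A.mulVec (w - u))) ∧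
    (∀ w : Fin d → ℝ, |w ⬝ᵥ x| ≤ C →
      (∀ v : Fin d → ℝ, |v ⬝ᵥ x| ≤ C →
        Real.sqrt ((w - u) ⬝ᵥ A.mulVec (w - u)) ≤
          Real.sqrt ((v - u) ⬝ᵥ A.mulVec (v - u))) →
      w = wstar) := by
  have hq : 0 < x ⬝ᵥ A⁻¹.mulVec x := by
    have := hA.inv.dotProduct_mulVec_pos hx
    simpa using this
  have hdet : IsUnit A.det := hA.det_pos.ne'.isUnit
  have hAg : A.mulVec (A⁻¹.mulVec x) = x := by
    rw [Matrix.mulVec_mulVec, Matrix.mul_nonsing_inv _ hdet, Matrix.one_mulVec]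
  have hsymm : ∀ a b : Fin d → ℝ, a ⬝ᵥ A.mulVec b = b ⬝ᵥ A.mulVec a := by
    intro a b
    have hT : Aᵀ = A := by
      have := hA.isHermitian.eq
      rwa [Matrix.conjTranspose_eq_transpose_of_trivial] at this
    rw [Matrix.dotProduct_mulVec, ← Matrix.mulVec_transpose, hT, dotProduct_comm]
  generalize A⁻¹.mulVec x = g at *
  generalize hs : tauC C (u ⬝ᵥ x) / (x ⬝ᵥ g) = s at *
  have hst : s * (x ⬝ᵥ g) = tauC C (u ⬝ᵥ x) := by
    rw [← hs]; field_simp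
  have hwx : wstar ⬝ᵥ x = u ⬝ᵥ x - tauC C (u ⬝ᵥ x) := by
    rw [hws, sub_dotProduct, smul_dotProduct, smul_eq_mul, dotProduct_comm g x, hst]
  have hfeas : |wstar ⬝ᵥ x| ≤ C := by
    rw [hwx]
    unfold tauC
    generalize u ⬝ᵥ x = y
    rw [abs_le]
    split_ifs <;> rcases max_cases (|y| - C) 0 with h | h <;> rcases abs_cases y with h' | h' <;>
      constructor <;> linarith
  have hsgn : ∀ w : Fin d → ℝ, |w ⬝ᵥ x| ≤ C → s * ((w - wstar) ⬝ᵥ x) ≤ 0 := by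
    intro w hw
    rw [← hs, sub_dotProduct, hwx, div_mul_eq_mul_div]
    apply div_nonpos_of_nonpos_of_nonneg _ hq.le
    unfold tauC
    generalize u ⬝ᵥ x = y
    generalize w ⬝ᵥ x = z at hw
    rw [abs_le] at hw
    split_ifs <;> rcases max_cases (|y| - C) 0 with h | h <;> rcases abs_cases y with h' | h' <;>
      rw [h.1] <;> first | nlinarith | (exfalso; linarith)
  have hexp : ∀ w : Fin d → ℝ, (w - u) ⬝ᵥ A.mulVec (w - u) =
      (w - wstar) ⬝ᵥ A.mulVec (w - wstar) - 2 * (s * ((w - wstar) ⬝ᵥ x))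
        + (wstar - u) ⬝ᵥ A.mulVec (wstar - u) := by
    intro w
    have h1 : w - u = (w - wstar) + (wstar - u) := by abel
    have h2 : A.mulVec (wstar - u) = (-s) • x := by
      have : wstar - u = (-s) • g := by rw [hws, neg_smul]; abel
      rw [this, Matrix.mulVec_smul, hAg]
    rw [h1, Matrix.mulVec_add, dotProduct_add, add_dotProduct, add_dotProduct,
      hsymm (wstar - u) (w - wstar), h2, dotProduct_smul, smul_eq_mul]
    ring
  have hnn : ∀ e : Fin d → ℝ, 0 ≤ e ⬝ᵥ A.mulVec e := by
    intro e
    simpa using hA.posSemidef.dotProduct_mulVec_nonneg e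
  refine ⟨hfeas, ?_, ?_⟩
  · intro w hw
    apply Real.sqrt_le_sqrt
    have := hexp w
    have := hsgn w hw
    have := hnn (w - wstar)
    linarith
  · intro w hw hmin
    have h1 := (Real.sqrt_le_sqrt_iff (hnn _)).1 (hmin wstar hfeas)
    have h2 := hexp w
    have h3 := hsgn w hw
    by_contra hne
    have h4 : 0 < (w - wstar) ⬝ᵥ A.mulVec (w - wstar) := by
      simpa using hA.dotProduct_mulVec_pos (sub_ne_zero.2 hne)
    linarith
end

section
/- Let x ∈ R^d with x ≠ 0, u ∈ R^d, C > 0, let A ∈ R^{d×d} be a symmetric positive semidefinite matrix, and let B ∈ R^{d×d} satisfy the Moore–Penrose conditions A B A = A, B A B = B, (A B)^⊤ = A B, and (B A)^⊤ = B A. If x lies in the range (column space) of A, then x^⊤ B x > 0 and the point w* = u − (τ_C(u^⊤ x) / (x^⊤ B x)) · B x satisfies |w*^⊤ x| ≤ C and minimizes ‖w − u‖_A over the set {w ∈ R^d : |w^⊤ x| ≤ C}. -/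
open Matrix

/-- **Projection with pseudoinverse, range case.** Let `A` be symmetric PSD and `B` its
Moore–Penrose pseudoinverse. If `x ≠ 0` lies in the column space of `A`, then `xᵀBx > 0`
and `w* = u - (τ_C(uᵀx) / (xᵀBx)) • Bx` satisfies `|w*ᵀx| ≤ C` and minimizes
`‖w - u‖_A = √((w-u)ᵀA(w-u))` over `{w : |wᵀx| ≤ C}`. -/
theorem projection_pseudoinverse_range
    (d : ℕ) (x u : Fin d → ℝ) (hx : x ≠ 0) (C : ℝ) (hC : 0 < C)
    (A B : Matrix (Fin d) (Fin d) ℝ) (hA : A.PosSemidef)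
    (hB1 : A * B * A = A) (hB2 : B * A * B = B)
    (hB3 : (A * B)ᵀ = A * B) (hB4 : (B * A)ᵀ = B * A)
    (hxrange : x ∈ Set.range A.mulVec)
    (wstar : Fin d → ℝ)
    (hws : wstar = u - (tauC C (u ⬝ᵥ x) / (x ⬝ᵥ B.mulVec x)) • B.mulVec x) :
    0 < x ⬝ᵥ B.mulVec x ∧
    |wstar ⬝ᵥ x| ≤ C ∧
    (∀ w : Fin d → ℝ, |w ⬝ᵥ x| ≤ C →
      Real.sqrt ((wstar - u) ⬝ᵥ A.mulVec (wstar - u)) ≤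
        Real.sqrt ((w - u) ⬝ᵥ A.mulVec (w - u))) := by
  obtain ⟨z, rfl⟩ := hxrange
  set x := A.mulVec z with hxdef
  set p := B.mulVec x with hp
  have hAp : A.mulVec p = x := by
    rw [hp, hxdef, mulVec_mulVec, mulVec_mulVec, hB1]
  have hAT : Aᵀ = A := by
    have := hA.isHermitian.eq
    rwa [conjTranspose_eq_transpose_of_trivial] at this
  have hsym : ∀ a b : Fin d → ℝ, a ⬝ᵥ A.mulVec b = b ⬝ᵥ A.mulVec a := by
    intro a b
    rw [dotProduct_mulVec, ← mulVec_transpose, hAT, dotProduct_comm]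
  have hnn : ∀ a : Fin d → ℝ, 0 ≤ a ⬝ᵥ A.mulVec a := by
    intro a
    simpa using hA.dotProduct_mulVec_nonneg a
  have hs0 : p ⬝ᵥ A.mulVec p = x ⬝ᵥ p := by rw [hAp, dotProduct_comm]
  have hs : 0 < x ⬝ᵥ p := by
    refine lt_of_le_of_ne (hs0 ▸ hnn p) fun h => hx ?_
    have h2 := (hA.dotProduct_mulVec_zero_iff p).1 (by simpa using hs0.trans h.symm)
    rw [← hAp, h2]
  have hquad : ∀ (v : Fin d → ℝ) (c : ℝ), (v - c • p) ⬝ᵥ A.mulVec (v - c • p)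
      = v ⬝ᵥ A.mulVec v - 2 * c * (v ⬝ᵥ x) + c ^ 2 * (x ⬝ᵥ p) := by
    intro v c
    have e1 : p ⬝ᵥ A.mulVec v = v ⬝ᵥ x := by rw [hsym, hAp]
    have e2 : p ⬝ᵥ x = x ⬝ᵥ p := dotProduct_comm _ _
    simp only [mulVec_sub, mulVec_smul, sub_dotProduct, dotProduct_sub, smul_dotProduct,
      dotProduct_smul, smul_eq_mul, e1, hAp, e2]
    ring
  have ht1 : ∀ y : ℝ, |y - tauC C y| ≤ C := by
    intro y
    unfold tauC
    split_ifs with h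
    · rw [abs_of_nonneg h, abs_le]
      rcases max_cases (y - C) 0 with h | h <;> constructor <;> linarith
    · rw [abs_of_neg (not_le.1 h), abs_le]
      rcases max_cases (-y - C) 0 with h | h <;> constructor <;> linarith
  have ht2 : ∀ y a : ℝ, |a| ≤ C → tauC C y * (a - y + tauC C y) ≤ 0 := by
    intro y a ha
    obtain ⟨h1, h2⟩ := abs_le.1 ha
    unfold tauC
    split_ifs with h
    · rw [abs_of_nonneg h]
      rcases max_cases (y - C) 0 with h | h <;> rw [h.1] <;> nlinarith
    · rw [abs_of_neg (not_le.1 h)]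
      rcases max_cases (-y - C) 0 with h | h <;> rw [h.1] <;> nlinarith
  refine ⟨hs, ?_, ?_⟩
  · have : wstar ⬝ᵥ x = u ⬝ᵥ x - tauC C (u ⬝ᵥ x) := by
      rw [hws, sub_dotProduct, smul_dotProduct, dotProduct_comm p x, smul_eq_mul,
        div_mul_cancel₀ _ hs.ne']
    rw [this]
    exact ht1 _
  · intro w hw
    apply Real.sqrt_le_sqrt
    have hk := ht2 (u ⬝ᵥ x) (w ⬝ᵥ x) hw
    set t := tauC C (u ⬝ᵥ x) with ht
    set s := x ⬝ᵥ p with hsdef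
    have hw1 : wstar - u = 0 - (t / s) • p := by rw [hws]; abel
    have h3 := hnn ((w - u) - (-(t / s)) • p)
    rw [hquad, sub_dotProduct w u x] at h3
    rw [hw1, hquad]
    have e3 : t = (t / s) * s := (div_mul_cancel₀ _ hs.ne').symm
    generalize t / s = r at *
    rw [e3] at hk
    have hk' : r * (w ⬝ᵥ x - u ⬝ᵥ x + r * s) ≤ 0 := by
      by_contra hcon
      push Not at hcon
      nlinarith [mul_pos hs hcon]
    simp only [zero_dotProduct]
    nlinarith
end

section
/- Let x ∈ R^d with x ≠ 0, u ∈ R^d, C > 0, let A ∈ R^{d×d} be a symmetric positive semidefinite matrix, and let B ∈ R^{d×d} satisfy the Moore–Penrose conditions A B A = A, B A B = B, (A B)^⊤ = A B, and (B A)^⊤ = B A. If x does NOT lie in the range of A, then x^⊤ (I − B A) x > 0 and the point w* = u − (τ_C(u^⊤ x) / (x^⊤ (I − B A) x)) · (I − B A) x satisfies |w*^⊤ x| ≤ C and ‖w* − u‖_A = 0; in particular w* minimizes ‖w − u‖_A over {w ∈ R^d : |w^⊤ x| ≤ C}. -/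
open Matrix

/-- **Projection with pseudoinverse, out-of-range case.** Let `A` be symmetric PSD and `B`
its Moore–Penrose pseudoinverse. If `x ≠ 0` does not lie in the column space of `A`, then
`xᵀ(I − BA)x > 0`, and `w* = u − (τ_C(uᵀx) / (xᵀ(I − BA)x)) • (I − BA)x` satisfies
`|w*ᵀx| ≤ C` and `‖w* − u‖_A = 0`; in particular it minimizes `‖w − u‖_A` over
`{w : |wᵀx| ≤ C}`. -/
theorem projection_pseudoinverse_not_range
    (d : ℕ) (x u : Fin d → ℝ) (hx : x ≠ 0) (C : ℝ) (hC : 0 < C)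
    (A B : Matrix (Fin d) (Fin d) ℝ) (hA : A.PosSemidef)
    (hB1 : A * B * A = A) (hB2 : B * A * B = B)
    (hB3 : (A * B)ᵀ = A * B) (hB4 : (B * A)ᵀ = B * A)
    (hxrange : x ∉ Set.range A.mulVec)
    (wstar : Fin d → ℝ)
    (hws : wstar = u - (tauC C (u ⬝ᵥ x) /
        (x ⬝ᵥ ((1 : Matrix (Fin d) (Fin d) ℝ) - B * A).mulVec x)) •
        ((1 : Matrix (Fin d) (Fin d) ℝ) - B * A).mulVec x) :
    0 < x ⬝ᵥ ((1 : Matrix (Fin d) (Fin d) ℝ) - B * A).mulVec x ∧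
    |wstar ⬝ᵥ x| ≤ C ∧
    Real.sqrt ((wstar - u) ⬝ᵥ A.mulVec (wstar - u)) = 0 ∧
    (∀ w : Fin d → ℝ, |w ⬝ᵥ x| ≤ C →
      Real.sqrt ((wstar - u) ⬝ᵥ A.mulVec (wstar - u)) ≤
        Real.sqrt ((w - u) ⬝ᵥ A.mulVec (w - u))) := by
  have hAT : Aᵀ = A := by
    have h := hA.1
    rwa [Matrix.IsHermitian, Matrix.conjTranspose_eq_transpose_of_trivial] at h
  set P : Matrix (Fin d) (Fin d) ℝ := 1 - B * A with hP
  have hPT : Pᵀ = P := by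
    rw [hP, Matrix.transpose_sub, hB4, Matrix.transpose_one]
  have hAP : A * P = 0 := by
    rw [hP, mul_sub, mul_one, ← mul_assoc, hB1, sub_self]
  have hPP : P * P = P := by
    have h : P * P = P - B * (A * P) := by
      rw [← mul_assoc]
      nth_rewrite 1 [hP]
      rw [sub_mul, one_mul]
    rw [h, hAP, mul_zero, sub_zero]
  have hq : x ⬝ᵥ P.mulVec x = P.mulVec x ⬝ᵥ P.mulVec x := by
    nth_rewrite 1 [← hPP]
    rw [← Matrix.mulVec_mulVec, Matrix.dotProduct_mulVec, ← Matrix.mulVec_transpose, hPT]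
  have hne : P.mulVec x ≠ 0 := by
    intro h0
    apply hxrange
    refine ⟨Bᵀ.mulVec x, ?_⟩
    have h1 : A * Bᵀ = B * A := by
      rw [← hB4, Matrix.transpose_mul, hAT]
    rw [Matrix.mulVec_mulVec, h1]
    rw [hP, Matrix.sub_mulVec, Matrix.one_mulVec, sub_eq_zero] at h0
    exact h0.symm
  have hpos : 0 < x ⬝ᵥ P.mulVec x := by
    rw [hq]
    refine lt_of_le_of_ne (Finset.sum_nonneg fun i _ => mul_self_nonneg _) ?_
    intro h
    exact hne (dotProduct_self_eq_zero.1 h.symm)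
  have hzero : Real.sqrt ((wstar - u) ⬝ᵥ A.mulVec (wstar - u)) = 0 := by
    have h2 : A.mulVec (wstar - u) = 0 := by
      rw [hws, sub_sub_cancel_left, Matrix.mulVec_neg, Matrix.mulVec_smul,
        Matrix.mulVec_mulVec, hAP, Matrix.zero_mulVec, smul_zero, neg_zero]
    rw [h2, dotProduct_zero, Real.sqrt_zero]
  refine ⟨hpos, ?_, hzero, fun w _ => by rw [hzero]; exact Real.sqrt_nonneg _⟩
  have h3 : wstar ⬝ᵥ x = u ⬝ᵥ x - tauC C (u ⬝ᵥ x) := by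
    rw [hws, sub_dotProduct, smul_dotProduct, dotProduct_comm (P.mulVec x) x, smul_eq_mul,
      div_mul_cancel₀ _ hpos.ne']
  rw [h3]
  generalize u ⬝ᵥ x = y
  unfold tauC
  rw [abs_le]
  split_ifs with hy
  · rw [abs_of_nonneg hy]
    rcases max_cases (y - C) 0 with h | h <;> constructor <;> linarith [h.1, h.2]
  · rw [abs_of_neg (not_le.1 hy)]
    rcases max_cases (-y - C) 0 with h | h <;> constructor <;> linarith [h.1, h.2]
end

section
/- In the setting of the Online Newton algorithm with A_t = α I_d + Σ_{s=1}^t (σ_s + η_s) g_s g_s^⊤, iterates w_1 = 0, u_{t+1} = w_t − A_t^{−1} g_t, w_{t+1} = argmin_{w ∈ K_{t+1}} ‖w − u_{t+1}‖_{A_t}, suppose the losses satisfy the Scalar Lipschitz and Curvature assumptions with σ_t = 0 for all t, and set η_t = √(d / (C² L² t)). Then for every w ∈ K, R_T(w) ≤ (α/2)‖w‖₂² + (CL/2)·√(Td)·ln(1 + Σ_{t=1}^T ‖g_t‖₂² / (α C L √(Td))) + 4 C L √(Td). -/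
open Matrix Finset

namespace ONHelp

lemma symm_bil {d : ℕ} {A : Matrix (Fin d) (Fin d) ℝ} (hA : A.PosDef) (p q : Fin d → ℝ) :
    p ⬝ᵥ A *ᵥ q = q ⬝ᵥ A *ᵥ p := by
  have h : Aᵀ = A := by simpa [Matrix.IsHermitian, conjTranspose_eq_transpose_of_trivial] using hA.1
  rw [dotProduct_mulVec, ← mulVec_transpose, h, dotProduct_comm]

lemma nonneg_bil {d : ℕ} {A : Matrix (Fin d) (Fin d) ℝ} (hA : A.PosDef) (p : Fin d → ℝ) :
    0 ≤ p ⬝ᵥ A *ᵥ p := by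
  simpa using hA.posSemidef.dotProduct_mulVec_nonneg p

lemma mul_inv_vec {d : ℕ} {A : Matrix (Fin d) (Fin d) ℝ} (hA : A.PosDef) (p : Fin d → ℝ) :
    A *ᵥ (A⁻¹ *ᵥ p) = p := by
  have : IsUnit A.det := hA.det_pos.ne'.isUnit
  rw [mulVec_mulVec, mul_nonsing_inv _ this, one_mulVec]

lemma expand {d : ℕ} {A : Matrix (Fin d) (Fin d) ℝ} (hA : A.PosDef) (p q : Fin d → ℝ) (s : ℝ) :
    (p + s • q) ⬝ᵥ A *ᵥ (p + s • q) =
      p ⬝ᵥ A *ᵥ p + 2 * s * (p ⬝ᵥ A *ᵥ q) + s ^ 2 * (q ⬝ᵥ A *ᵥ q) := by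
  simp only [mulVec_add, mulVec_smul, add_dotProduct, dotProduct_add, smul_dotProduct,
    dotProduct_smul, smul_eq_mul]
  rw [symm_bil hA q p]; ring

lemma inv_mono {d : ℕ} {A B : Matrix (Fin d) (Fin d) ℝ} (hA : A.PosDef) (hB : B.PosDef)
    (h : ∀ v : Fin d → ℝ, v ⬝ᵥ B *ᵥ v ≤ v ⬝ᵥ A *ᵥ v) (g : Fin d → ℝ) :
    g ⬝ᵥ A⁻¹ *ᵥ g ≤ g ⬝ᵥ B⁻¹ *ᵥ g := by
  have h1 := expand hB (A⁻¹ *ᵥ g) (B⁻¹ *ᵥ g) (-1)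
  have h2 := nonneg_bil hB (A⁻¹ *ᵥ g + (-1 : ℝ) • (B⁻¹ *ᵥ g))
  have h3 := h (A⁻¹ *ᵥ g)
  rw [mul_inv_vec hB] at h1
  rw [mul_inv_vec hA] at h3
  rw [dotProduct_comm g, dotProduct_comm g]
  linarith

lemma log_step {d : ℕ} {B B' : Matrix (Fin d) (Fin d) ℝ} (hB : B.PosDef) (hB' : B'.PosDef)
    (c : ℝ) (g : Fin d → ℝ) (h : B' = B + c • vecMulVec g g) :
    c * (g ⬝ᵥ B'⁻¹ *ᵥ g) ≤ Real.log B'.det - Real.log B.det := by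
  have hu : IsUnit B'.det := hB'.det_pos.ne'.isUnit
  have h1 : B = B' + replicateCol Unit ((-c) • g) * replicateRow Unit g := by
    rw [← vecMulVec_eq, h, smul_vecMulVec, neg_smul]; abel
  have h2 := det_add_replicateCol_mul_replicateRow (ι := Unit) hu ((-c) • g) g
  rw [← h1] at h2
  have h3 : (1 + replicateRow Unit g * B'⁻¹ * replicateCol Unit ((-c) • g)).det
      = 1 - c * (g ⬝ᵥ B'⁻¹ *ᵥ g) := by
    rw [det_unique, Matrix.mul_assoc, ← replicateCol_mulVec, Matrix.add_apply,
      Matrix.replicateRow_mul_replicateCol_apply, mulVec_smul, dotProduct_smul]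
    simp; ring
  rw [h3] at h2
  have p := hB.det_pos
  have p' := hB'.det_pos
  have h4 : 0 < 1 - c * (g ⬝ᵥ B'⁻¹ *ᵥ g) := by
    by_contra hh
    push Not at hh
    nlinarith
  rw [h2, Real.log_mul p'.ne' h4.ne']
  have := Real.log_le_sub_one_of_pos h4
  linarith

lemma log_det_le {d : ℕ} (hd : 0 < d) {B : Matrix (Fin d) (Fin d) ℝ} (hB : B.PosDef) :
    Real.log B.det ≤ d * Real.log (B.trace / d) := by
  have hp := hB.eigenvalues_pos
  have h1 : B.det = ∏ i, hB.1.eigenvalues i := by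
    simpa using hB.1.det_eq_prod_eigenvalues
  have h2 : B.trace = ∑ i, hB.1.eigenvalues i := by
    simpa using hB.1.trace_eq_sum_eigenvalues
  have hd' : (0 : ℝ) < d := by exact_mod_cast hd
  have : Nonempty (Fin d) := ⟨⟨0, hd⟩⟩
  have ht : 0 < B.trace := by
    rw [h2]; exact Finset.sum_pos (fun i _ => hp i) Finset.univ_nonempty
  set m := B.trace / d with hm
  have hmp : 0 < m := by positivity
  rw [h1, Real.log_prod (fun i _ => (hp i).ne')]
  have h3 : ∀ i, Real.log (hB.1.eigenvalues i) ≤ Real.log m + (hB.1.eigenvalues i / m - 1) := by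
    intro i
    have := Real.log_le_sub_one_of_pos (div_pos (hp i) hmp)
    rw [Real.log_div (hp i).ne' hmp.ne'] at this
    linarith
  refine (Finset.sum_le_sum fun i _ => h3 i).trans ?_
  rw [Finset.sum_add_distrib, Finset.sum_sub_distrib, ← Finset.sum_div, ← h2]
  have : B.trace / m = d := by rw [hm]; field_simp
  simp [this]

lemma sum_sqrt (T : ℕ) : ∑ t ∈ Finset.Icc 1 T, 1 / Real.sqrt t ≤ 2 * Real.sqrt T := by
  induction T with
  | zero => simp
  | succ n ih =>
    rw [Finset.sum_Icc_succ_top (by omega)]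
    have hb : 0 < Real.sqrt ((n + 1 : ℕ) : ℝ) := Real.sqrt_pos.2 (by positivity)
    have ha := Real.sqrt_nonneg (n : ℝ)
    have h1 := Real.sq_sqrt (show (0 : ℝ) ≤ n by positivity)
    have h2 := Real.sq_sqrt (show (0 : ℝ) ≤ ((n + 1 : ℕ) : ℝ) by positivity)
    push_cast at h2 hb ⊢
    have : 1 / √((n : ℝ) + 1) ≤ 2 * √((n : ℝ) + 1) - 2 * √(n : ℝ) := by
      rw [div_le_iff₀ hb]
      nlinarith [sq_nonneg (√((n : ℝ) + 1) - √(n : ℝ))]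
    linarith

lemma tangent {f : ℝ → ℝ} (hf : ConvexOn ℝ Set.univ f) (hd : Differentiable ℝ f) (a b : ℝ) :
    f a - f b ≤ deriv f a * (a - b) := by
  rcases lt_trichotomy a b with h | h | h
  · have := hf.deriv_le_slope (Set.mem_univ a) (Set.mem_univ b) h (hd a)
    rw [slope_def_field, le_div_iff₀ (by linarith)] at this
    linarith
  · simp [h]
  · have := hf.slope_le_deriv (Set.mem_univ b) (Set.mem_univ a) h (hd a)
    rw [slope_def_field, div_le_iff₀ (by linarith)] at this
    linarith

lemma proj {d : ℕ} {A : Matrix (Fin d) (Fin d) ℝ} (hA : A.PosDef) (x p u v : Fin d → ℝ) (C : ℝ)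
    (hp : |p ⬝ᵥ x| ≤ C) (hv : |v ⬝ᵥ x| ≤ C)
    (hmin : ∀ v : Fin d → ℝ, |v ⬝ᵥ x| ≤ C →
      Real.sqrt ((p - u) ⬝ᵥ A *ᵥ (p - u)) ≤ Real.sqrt ((v - u) ⬝ᵥ A *ᵥ (v - u))) :
    (p - v) ⬝ᵥ A *ᵥ (p - v) ≤ (u - v) ⬝ᵥ A *ᵥ (u - v) := by
  have key : ∀ s : ℝ, 0 < s → s ≤ 1 →
      0 ≤ 2 * ((p - u) ⬝ᵥ A *ᵥ (v - p)) + s * ((v - p) ⬝ᵥ A *ᵥ (v - p)) := by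
    intro s hs hs1
    have h1 := hmin (p + s • (v - p)) (by
      rw [add_dotProduct, smul_dotProduct, sub_dotProduct, smul_eq_mul]
      rw [abs_le] at *
      constructor <;> nlinarith [hp.1, hp.2, hv.1, hv.2])
    rw [Real.sqrt_le_sqrt_iff (nonneg_bil hA _),
      show p + s • (v - p) - u = (p - u) + s • (v - p) by abel, expand hA] at h1
    have : 0 ≤ s * (2 * ((p - u) ⬝ᵥ A *ᵥ (v - p)) + s * ((v - p) ⬝ᵥ A *ᵥ (v - p))) := by
      nlinarith
    exact nonneg_of_mul_nonneg_right this hs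
  have hcr : 0 ≤ (p - u) ⬝ᵥ A *ᵥ (v - p) := by
    have hq := nonneg_bil hA (v - p)
    set a := (p - u) ⬝ᵥ A *ᵥ (v - p)
    set b := (v - p) ⬝ᵥ A *ᵥ (v - p)
    by_contra hh
    push Not at hh
    have h1 := key (min 1 (-a / (b + 1))) (lt_min one_pos (div_pos (by linarith) (by linarith)))
      (min_le_left _ _)
    have h2 : min 1 (-a / (b + 1)) * b ≤ -a / (b + 1) * b :=
      mul_le_mul_of_nonneg_right (min_le_right _ _) hq
    have h3 : -a / (b + 1) * b ≤ -a := by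
      rw [div_mul_eq_mul_div, div_le_iff₀ (by linarith)]
      nlinarith
    linarith
  have h1 := expand hA (p - u) (v - p) 1
  have h2 := nonneg_bil hA (p - u)
  have e1 : (p - u) + (1 : ℝ) • (v - p) = -(u - v) := by rw [one_smul]; abel
  have e2 : v - p = -(p - v) := by abel
  rw [e1, e2] at h1
  rw [e2] at hcr
  simp only [mulVec_neg, neg_dotProduct, dotProduct_neg, neg_neg] at h1 hcr
  linarith

noncomputable def M {d : ℕ} (α : ℝ) (c : ℕ → ℝ) (g : ℕ → Fin d → ℝ) (t : ℕ) :
    Matrix (Fin d) (Fin d) ℝ :=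
  α • 1 + ∑ s ∈ Finset.Icc 1 t, c s • vecMulVec (g s) (g s)

lemma M_bil {d : ℕ} (α : ℝ) (c : ℕ → ℝ) (g : ℕ → Fin d → ℝ) (t : ℕ) (v : Fin d → ℝ) :
    v ⬝ᵥ M α c g t *ᵥ v = α * (v ⬝ᵥ v) + ∑ s ∈ Finset.Icc 1 t, c s * (g s ⬝ᵥ v) ^ 2 := by
  rw [M, add_mulVec, dotProduct_add, smul_mulVec, one_mulVec, dotProduct_smul, smul_eq_mul,
    Matrix.sum_mulVec, dotProduct_sum]
  congr 1
  refine Finset.sum_congr rfl fun s _ => ?_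
  rw [smul_mulVec, vecMulVec_mulVec, dotProduct_smul]
  simp only [op_smul_eq_smul, smul_eq_mul, dotProduct_comm v, smul_dotProduct]
  ring

lemma M_succ {d : ℕ} (α : ℝ) (c : ℕ → ℝ) (g : ℕ → Fin d → ℝ) (t : ℕ) :
    M α c g (t + 1) = M α c g t + c (t + 1) • vecMulVec (g (t + 1)) (g (t + 1)) := by
  rw [M, M, Finset.sum_Icc_succ_top (by omega), add_assoc]

lemma M_posDef {d : ℕ} {α : ℝ} (hα : 0 < α) (c : ℕ → ℝ) (g : ℕ → Fin d → ℝ) (t : ℕ)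
    (hc : ∀ s ∈ Finset.Icc 1 t, 0 ≤ c s) : (M α c g t).PosDef := by
  refine .of_dotProduct_mulVec_pos ?_ ?_
  · rw [Matrix.IsHermitian, conjTranspose_eq_transpose_of_trivial, M]
    simp [transpose_sum, transpose_vecMulVec]
  · intro v hv
    rw [star_trivial, M_bil]
    have h1 : 0 < v ⬝ᵥ v := by
      simpa using (dotProduct_star_self_pos_iff (v := v)).2 hv
    have h2 : 0 ≤ ∑ s ∈ Finset.Icc 1 t, c s * (g s ⬝ᵥ v) ^ 2 :=
      Finset.sum_nonneg fun s hs => mul_nonneg (hc s hs) (sq_nonneg _)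
    positivity

lemma M_trace {d : ℕ} (α : ℝ) (c : ℕ → ℝ) (g : ℕ → Fin d → ℝ) (t : ℕ) :
    (M α c g t).trace = α * d + ∑ s ∈ Finset.Icc 1 t, c s * (g s ⬝ᵥ g s) := by
  simp [M, trace_add, trace_sum, trace_smul, trace_vecMulVec]

/-- The elliptical potential bound with a constant step. -/
lemma potential {d : ℕ} (hd : 0 < d) {α c : ℝ} (hα : 0 < α) (hc : 0 < c) (g : ℕ → Fin d → ℝ)
    (T : ℕ) :
    c * ∑ t ∈ Finset.Icc 1 T, g t ⬝ᵥ (M α (fun _ => c) g t)⁻¹ *ᵥ g t ≤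
      d * Real.log (1 + c * (∑ t ∈ Finset.Icc 1 T, g t ⬝ᵥ g t) / (α * d)) := by
  have hP : ∀ t, (M α (fun _ => c) g t).PosDef := fun t => M_posDef hα _ g t fun _ _ => hc.le
  have h1 : ∀ T, c * ∑ t ∈ Finset.Icc 1 T, g t ⬝ᵥ (M α (fun _ => c) g t)⁻¹ *ᵥ g t ≤
      Real.log (M α (fun _ => c) g T).det - Real.log (M α (fun _ => c) g 0).det := by
    intro T
    induction T with
    | zero => simp
    | succ n ih =>
      rw [Finset.sum_Icc_succ_top (by omega), mul_add]
      have := log_step (hP n) (hP (n + 1)) c (g (n + 1)) (M_succ α _ g n)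
      linarith
  have h0 : Real.log (M α (fun _ => c) g 0).det = d * Real.log α := by
    simp [M, det_smul]
  have hd' : (0 : ℝ) < d := by exact_mod_cast hd
  have h2 := log_det_le hd (hP T)
  rw [M_trace, ← Finset.mul_sum] at h2
  set S := ∑ t ∈ Finset.Icc 1 T, g t ⬝ᵥ g t with hS
  have hS0 : 0 ≤ S := Finset.sum_nonneg fun t _ => by
    simpa using dotProduct_star_self_nonneg (g t)
  have e : (α * d + c * S) / d = α * (1 + c * S / (α * d)) := by field_simp
  rw [e, Real.log_mul hα.ne' (by positivity)] at h2
  have := h1 T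
  linarith

end ONHelp


/-- **Worst-case regret of Online Newton (Eq. (4)).** With `σ_t = 0` and
`η_t = √(d/(C²L²t))`, the Online Newton algorithm satisfies, for every `w ∈ K`,
`R_T(w) ≤ (α/2)‖w‖₂² + (CL/2)√(Td) ln(1 + Σ_t ‖g_t‖₂²/(αCL√(Td))) + 4CL√(Td)`. -/
theorem online_newton_convex_case
    (d T : ℕ) (C L α : ℝ) (hC : 0 < C) (hL : 0 < L) (hα : 0 < α)
    (x : ℕ → Fin d → ℝ) (ℓ : ℕ → ℝ → ℝ) (σ η : ℕ → ℝ)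
    (hconv : ∀ t ∈ Finset.Icc 1 T, ConvexOn ℝ Set.univ (ℓ t))
    (hdiff : ∀ t ∈ Finset.Icc 1 T, Differentiable ℝ (ℓ t))
    -- Scalar Lipschitz assumption
    (hLip : ∀ t ∈ Finset.Icc 1 T, ∀ z : ℝ, |z| ≤ C → |deriv (ℓ t) z| ≤ L)
    (hσ : ∀ t ∈ Finset.Icc 1 T, σ t = 0)
    (hηdef : ∀ t ∈ Finset.Icc 1 T, η t = Real.sqrt ((d : ℝ) / (C ^ 2 * L ^ 2 * t)))
    (K : Set (Fin d → ℝ))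
    (hK : K = {v : Fin d → ℝ | ∀ t ∈ Finset.Icc 1 T, |v ⬝ᵥ x t| ≤ C})
    (f : ℕ → (Fin d → ℝ) → ℝ)
    (hf : ∀ t, ∀ v : Fin d → ℝ, f t v = ℓ t (v ⬝ᵥ x t))
    (w u g : ℕ → Fin d → ℝ)
    (hg : ∀ t, g t = deriv (ℓ t) (w t ⬝ᵥ x t) • x t)
    -- Curvature assumption
    (hcurv : ∀ t ∈ Finset.Icc 1 T, ∀ p ∈ K, ∀ q ∈ K,
      f t p + (deriv (ℓ t) (p ⬝ᵥ x t) • x t) ⬝ᵥ (q - p)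
        + σ t / 2 * ((deriv (ℓ t) (p ⬝ᵥ x t) • x t) ⬝ᵥ (p - q)) ^ 2 ≤ f t q)
    (A : ℕ → Matrix (Fin d) (Fin d) ℝ)
    (hA : ∀ t, A t = α • (1 : Matrix (Fin d) (Fin d) ℝ)
        + ∑ s ∈ Finset.Icc 1 t, (σ s + η s) • Matrix.vecMulVec (g s) (g s))
    -- iterates
    (hw1 : w 1 = 0)
    (hu : ∀ t ∈ Finset.Icc 1 T, u (t + 1) = w t - (A t)⁻¹.mulVec (g t))
    (hproj : ∀ t ∈ Finset.Icc 1 T,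
      |w (t + 1) ⬝ᵥ x (t + 1)| ≤ C ∧
      ∀ v : Fin d → ℝ, |v ⬝ᵥ x (t + 1)| ≤ C →
        Real.sqrt ((w (t + 1) - u (t + 1)) ⬝ᵥ (A t).mulVec (w (t + 1) - u (t + 1))) ≤
          Real.sqrt ((v - u (t + 1)) ⬝ᵥ (A t).mulVec (v - u (t + 1)))) :
    ∀ wc ∈ K,
      ∑ t ∈ Finset.Icc 1 T, (f t (w t) - f t wc) ≤
        α / 2 * (wc ⬝ᵥ wc)
        + C * L / 2 * Real.sqrt ((T : ℝ) * d) *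
            Real.log (1 + (∑ t ∈ Finset.Icc 1 T, g t ⬝ᵥ g t)
              / (α * C * L * Real.sqrt ((T : ℝ) * d)))
        + 4 * C * L * Real.sqrt ((T : ℝ) * d) := by
  intro wc hwc
  rw [hK] at hwc
  have hη0 : ∀ t ∈ Finset.Icc 1 T, 0 ≤ σ t + η t := by
    intro t ht; rw [hσ t ht, hηdef t ht, zero_add]; exact Real.sqrt_nonneg _
  have hAM : ∀ t, A t = ONHelp.M α (fun s => σ s + η s) g t := hA
  have hP : ∀ t ≤ T, (A t).PosDef := by
    intro t ht
    rw [hAM]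
    refine ONHelp.M_posDef hα _ g t fun s hs => hη0 s ?_
    simp only [Finset.mem_Icc] at hs ⊢; omega
  have hwC : ∀ t ∈ Finset.Icc 1 T, |w t ⬝ᵥ x t| ≤ C := by
    intro t ht
    rw [Finset.mem_Icc] at ht
    obtain ⟨n, rfl⟩ : ∃ n, t = n + 1 := ⟨t - 1, by omega⟩
    rcases Nat.eq_zero_or_pos n with rfl | hn
    · simp [hw1, hC.le]
    · exact (hproj n (by rw [Finset.mem_Icc]; omega)).1
  have hsub : ∀ t v, g t ⬝ᵥ v = deriv (ℓ t) (w t ⬝ᵥ x t) * (v ⬝ᵥ x t) := by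
    intro t v
    rw [hg, smul_dotProduct, smul_eq_mul, dotProduct_comm v]
  have hlin : ∀ t ∈ Finset.Icc 1 T, f t (w t) - f t wc ≤ g t ⬝ᵥ (w t - wc) := by
    intro t ht
    rw [hf, hf, hsub, sub_dotProduct]
    exact ONHelp.tangent (hconv t ht) (hdiff t ht) _ _
  have hsq : ∀ t ∈ Finset.Icc 1 T, (g t ⬝ᵥ (w t - wc)) ^ 2 ≤ 4 * C ^ 2 * L ^ 2 := by
    intro t ht
    rw [hsub, sub_dotProduct]
    have h1 := hLip t ht _ (hwC t ht)
    have h2 : |w t ⬝ᵥ x t - wc ⬝ᵥ x t| ≤ 2 * C := by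
      have := abs_sub (w t ⬝ᵥ x t) (wc ⬝ᵥ x t)
      have h3 := hwC t ht
      have h4 := hwc t ht
      linarith
    rw [← sq_abs, abs_mul]
    calc _ ≤ (L * (2 * C)) ^ 2 := by gcongr
      _ = _ := by ring
  -- regret recursion
  let E : ℕ → ℝ := fun n => if n < T then (w (n + 1) - wc) ⬝ᵥ A n *ᵥ (w (n + 1) - wc) else 0
  have hE : ∀ t ∈ Finset.Icc 1 T, E t ≤ (u (t + 1) - wc) ⬝ᵥ A t *ᵥ (u (t + 1) - wc) := by
    intro t ht
    have ht' := Finset.mem_Icc.1 ht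
    by_cases h : t < T
    · simp only [E, h, if_true]
      exact ONHelp.proj (hP t ht'.2) (x (t + 1)) _ _ _ C (hproj t ht).1
        (hwc (t + 1) (by rw [Finset.mem_Icc]; omega)) (hproj t ht).2
    · simp only [E, h, if_false]
      exact ONHelp.nonneg_bil (hP t ht'.2) _
  have hrec : ∀ n ≤ T, 2 * ∑ t ∈ Finset.Icc 1 n, g t ⬝ᵥ (w t - wc) + E n ≤
      α * (wc ⬝ᵥ wc) + ∑ t ∈ Finset.Icc 1 n, (σ t + η t) * (g t ⬝ᵥ (w t - wc)) ^ 2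
        + ∑ t ∈ Finset.Icc 1 n, g t ⬝ᵥ (A t)⁻¹ *ᵥ g t := by
    intro n
    induction n with
    | zero =>
      intro _
      have h0 : 0 ≤ wc ⬝ᵥ wc := by simpa using dotProduct_star_self_nonneg wc
      have : E 0 ≤ α * (wc ⬝ᵥ wc) := by
        by_cases h : 0 < T
        · simp only [E, h, if_true]
          rw [hAM, ONHelp.M_bil]
          simp [hw1]
        · simp only [E, h, if_false]
          positivity
      simpa using this
    | succ n ih =>
      intro hn
      have ih' := ih (by omega)
      have hm : n + 1 ∈ Finset.Icc 1 T := by rw [Finset.mem_Icc]; omega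
      have hEn : E n = (w (n + 1) - wc) ⬝ᵥ A n *ᵥ (w (n + 1) - wc) := by
        simp only [E, show n < T by omega, if_true]
      have h1 := hE (n + 1) hm
      have hp := hP (n + 1) hn
      rw [hu (n + 1) hm, show w (n + 1) - (A (n + 1))⁻¹ *ᵥ g (n + 1) - wc =
        (w (n + 1) - wc) + (-1 : ℝ) • ((A (n + 1))⁻¹ *ᵥ g (n + 1)) by
          rw [neg_smul, one_smul]; abel, ONHelp.expand hp, ONHelp.mul_inv_vec hp,
        dotProduct_comm _ (g (n + 1)), dotProduct_comm _ (g (n + 1))] at h1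
      have h2 : (w (n + 1) - wc) ⬝ᵥ A (n + 1) *ᵥ (w (n + 1) - wc) =
          (w (n + 1) - wc) ⬝ᵥ A n *ᵥ (w (n + 1) - wc) +
            (σ (n + 1) + η (n + 1)) * (g (n + 1) ⬝ᵥ (w (n + 1) - wc)) ^ 2 := by
        rw [hAM, hAM, ONHelp.M_bil, ONHelp.M_bil, Finset.sum_Icc_succ_top (by omega)]
        ring
      rw [Finset.sum_Icc_succ_top (by omega), Finset.sum_Icc_succ_top (by omega),
        Finset.sum_Icc_succ_top (by omega)]
      linarith
  have hmain := hrec T le_rfl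
  have hET : E T = 0 := by simp [E]
  have hreg := Finset.sum_le_sum hlin
  rcases Nat.eq_zero_or_pos d with rfl | hd
  · have : ∀ t, w t = wc := fun t => Subsingleton.elim _ _
    simp [this]
  rcases Nat.eq_zero_or_pos T with rfl | hT
  · have h0 : 0 ≤ wc ⬝ᵥ wc := by simpa using dotProduct_star_self_nonneg wc
    simp
    positivity
  have hd' : (0 : ℝ) < d := by exact_mod_cast hd
  have hT' : (0 : ℝ) < T := by exact_mod_cast hT
  have hsd : 0 < √(d : ℝ) := Real.sqrt_pos.2 hd'
  have hsT : 0 < √(T : ℝ) := Real.sqrt_pos.2 hT'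
  have hηe : ∀ t ∈ Finset.Icc 1 T, σ t + η t = √(d : ℝ) / (C * L) * (1 / √(t : ℝ)) := by
    intro t ht
    rw [hσ t ht, hηdef t ht, zero_add, Real.sqrt_div hd'.le, Real.sqrt_mul (by positivity),
      show C ^ 2 * L ^ 2 = (C * L) ^ 2 by ring, Real.sqrt_sq (by positivity)]
    rw [div_mul_div_comm, mul_one]
  set c := √(d : ℝ) / (C * L) * (1 / √(T : ℝ)) with hc
  have hc0 : 0 < c := by positivity
  have hcle : ∀ t ∈ Finset.Icc 1 T, c ≤ σ t + η t := by
    intro t ht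
    have ht' := Finset.mem_Icc.1 ht
    have : (0 : ℝ) < t := by exact_mod_cast ht'.1
    have h2 : (t : ℝ) ≤ T := by exact_mod_cast ht'.2
    rw [hηe t ht, hc]
    gcongr
  have hb1 : ∑ t ∈ Finset.Icc 1 T, (σ t + η t) * (g t ⬝ᵥ (w t - wc)) ^ 2 ≤
      8 * C * L * (√(T : ℝ) * √(d : ℝ)) := by
    calc _ ≤ ∑ t ∈ Finset.Icc 1 T, 4 * C * L * √(d : ℝ) * (1 / √(t : ℝ)) := by
          refine Finset.sum_le_sum fun t ht => ?_
          refine (mul_le_mul_of_nonneg_left (hsq t ht) (hη0 t ht)).trans (le_of_eq ?_)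
          rw [hηe t ht]
          field_simp
      _ = 4 * C * L * √(d : ℝ) * ∑ t ∈ Finset.Icc 1 T, (1 / √(t : ℝ)) := by
          rw [Finset.mul_sum]
      _ ≤ 4 * C * L * √(d : ℝ) * (2 * √(T : ℝ)) := by
          have := ONHelp.sum_sqrt T
          gcongr
      _ = _ := by ring
  have hb2 : ∑ t ∈ Finset.Icc 1 T, g t ⬝ᵥ (A t)⁻¹ *ᵥ g t ≤
      ∑ t ∈ Finset.Icc 1 T, g t ⬝ᵥ (ONHelp.M α (fun _ => c) g t)⁻¹ *ᵥ g t := by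
    refine Finset.sum_le_sum fun t ht => ?_
    have ht' := Finset.mem_Icc.1 ht
    refine ONHelp.inv_mono (hP t ht'.2) (ONHelp.M_posDef hα _ g t fun _ _ => hc0.le) ?_ _
    intro v
    rw [hAM, ONHelp.M_bil, ONHelp.M_bil]
    gcongr with s hs
    apply hcle
    simp only [Finset.mem_Icc] at hs ⊢; omega
  have hb3 := ONHelp.potential hd hα hc0 g T
  set S := ∑ t ∈ Finset.Icc 1 T, g t ⬝ᵥ g t with hS
  have hdd : √(d : ℝ) * √(d : ℝ) = d := Real.mul_self_sqrt hd'.le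
  have e1 : c * S / (α * d) = S / (α * C * L * (√(T : ℝ) * √(d : ℝ))) := by
    rw [hc]; field_simp; rw [Real.sq_sqrt hd'.le, mul_comm]
  have e2 : (d : ℝ) = c * (C * L * (√(T : ℝ) * √(d : ℝ))) := by
    rw [hc]; field_simp; linarith
  rw [e1] at hb3
  nth_rewrite 1 [e2] at hb3
  rw [mul_assoc c] at hb3
  have hb4 := le_of_mul_le_mul_left hb3 hc0
  rw [Real.sqrt_mul hT'.le]
  linarith
end

section
/- Let g_1, ..., g_T ∈ R^d and define Â_t = Σ_{s=1}^t g_s g_s^⊤ for t = 1,...,T. For each t, let Â_t^† denote the Moore–Penrose pseudoinverse of Â_t (i.e., the unique matrix B with Â_t B Â_t = Â_t, B Â_t B = B, (Â_t B)^⊤ = Â_t B, (B Â_t)^⊤ = B Â_t). Let λ* > 0 be a lower bound on the smallest nonzero eigenvalue of Â_t for every t ∈ {1,...,T}, and let r be the rank of Â_T. Then Σ_{t=1}^T g_t^⊤ Â_t^† g_t ≤ r + ((1+r)r/2)·ln(1 + 2 Σ_{t=1}^T ‖g_t‖₂² / ((1+r) r λ*)). -/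
open Matrix Finset

lemma pgb_sum_sub {n : Type*} [Fintype n] (p : n → Prop) [DecidablePred p] (f : n → ℝ)
    (h : ∀ j, ¬ p j → f j = 0) : ∑ j : {i // p i}, f j = ∑ j, f j := by
  rw [← Finset.sum_filter_of_ne (p := p) (s := Finset.univ)
    (fun x _ hx => by by_contra hp; exact hx (h x hp))]
  exact (Finset.sum_subtype _ (by simp) f).symm

lemma pgb_jensen {κ : Type*} (s : Finset κ) (w x : κ → ℝ) (hw : ∀ i ∈ s, 0 ≤ w i)
    (hx : ∀ i ∈ s, 0 < x i) (hW : 0 < ∑ i ∈ s, w i) :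
    ∑ i ∈ s, w i * Real.log (x i) ≤
      (∑ i ∈ s, w i) * Real.log ((∑ i ∈ s, w i * x i) / ∑ i ∈ s, w i) := by
  set W := ∑ i ∈ s, w i with hWd
  set S := ∑ i ∈ s, w i * x i with hS
  have hSpos : 0 < S := by
    obtain ⟨i, hi, hne⟩ := Finset.exists_ne_zero_of_sum_ne_zero hW.ne'
    refine Finset.sum_pos' (fun i hi => mul_nonneg (hw i hi) (hx i hi).le) ⟨i, hi, ?_⟩
    exact mul_pos (lt_of_le_of_ne (hw i hi) (Ne.symm hne)) (hx i hi)
  have hm : 0 < S / W := div_pos hSpos hW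
  have key : ∀ i ∈ s, w i * Real.log (x i) ≤
      w i * Real.log (S / W) + (w i * x i * (W / S) - w i) := by
    intro i hi
    have h1 := Real.log_le_sub_one_of_pos (div_pos (hx i hi) hm)
    rw [Real.log_div (hx i hi).ne' hm.ne'] at h1
    have h2 : x i / (S / W) = x i * (W / S) := by field_simp
    rw [h2] at h1
    nlinarith [mul_le_mul_of_nonneg_left h1 (hw i hi)]
  refine (Finset.sum_le_sum key).trans (le_of_eq ?_)
  rw [Finset.sum_add_distrib, Finset.sum_sub_distrib, ← Finset.sum_mul, ← Finset.sum_mul,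
    ← hS, ← hWd]
  field_simp
  ring

lemma pgb_factor {d : ℕ} (A : Matrix (Fin d) (Fin d) ℝ) (hA : A.IsHermitian) (lam : ℝ)
    (hlam : 0 < lam) (hlb : ∀ i, hA.eigenvalues i ≠ 0 → lam ≤ hA.eigenvalues i) :
    ∃ L : Matrix (Fin d) {i // hA.eigenvalues i ≠ 0} ℝ, L * Lᵀ = A ∧
      (∀ h, lam * (h ⬝ᵥ h) ≤ (L *ᵥ h) ⬝ᵥ (L *ᵥ h)) ∧
      (∀ g, (∀ x, A *ᵥ x = 0 → g ⬝ᵥ x = 0) → ∃ h, L *ᵥ h = g) := by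
  obtain ⟨U, hUd⟩ : ∃ U : Matrix (Fin d) (Fin d) ℝ, U = hA.eigenvectorUnitary := ⟨_, rfl⟩
  have hU1 : U * Uᵀ = 1 := by
    have := Unitary.coe_mul_star_self hA.eigenvectorUnitary
    rw [Unitary.coe_star, ← hUd, Matrix.star_eq_conjTranspose,
      conjTranspose_eq_transpose_of_trivial] at this
    exact this
  have hU2 : Uᵀ * U = 1 := by
    have := Unitary.coe_star_mul_self hA.eigenvectorUnitary
    rw [← hUd, Matrix.star_eq_conjTranspose, conjTranspose_eq_transpose_of_trivial] at this
    exact this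
  have hsp : A = U * diagonal hA.eigenvalues * Uᵀ := by
    have := hA.spectral_theorem
    rw [Unitary.conjStarAlgAut_apply, ← hUd, Matrix.star_eq_conjTranspose,
      conjTranspose_eq_transpose_of_trivial] at this
    simpa using this
  set ev := hA.eigenvalues with hev
  have hpos : ∀ j : {i // ev i ≠ 0}, 0 < ev j := fun j => hlam.trans_le (hlb j j.2)
  have hsq : ∀ j : {i // ev i ≠ 0}, Real.sqrt (ev j) * Real.sqrt (ev j) = ev j :=
    fun j => Real.mul_self_sqrt (hpos j).le
  refine ⟨Matrix.of fun i j => U i j * Real.sqrt (ev j), ?_, ?_, ?_⟩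
  · ext i k
    rw [hsp, Matrix.mul_apply, Matrix.mul_apply]
    simp only [Matrix.mul_diagonal, Matrix.transpose_apply, Matrix.of_apply]
    rw [← pgb_sum_sub (fun j => ev j ≠ 0)]
    · refine Finset.sum_congr rfl fun j _ => ?_
      linear_combination (U i j * U k j) * hsq j
    · intro j hj
      simp only [not_not] at hj
      simp [hj]
  · intro h
    have hLL : (Matrix.of fun (i : Fin d) (j : {i // ev i ≠ 0}) => U i j * Real.sqrt (ev j))ᵀ *
        (Matrix.of fun (i : Fin d) (j : {i // ev i ≠ 0}) => U i j * Real.sqrt (ev j)) =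
        diagonal (fun j : {i // ev i ≠ 0} => ev j) := by
      ext j k
      rw [Matrix.mul_apply]
      have h2 : ∑ i, U i j * U i k = (1 : Matrix (Fin d) (Fin d) ℝ) j k := by
        rw [← hU2, Matrix.mul_apply]; rfl
      simp only [Matrix.transpose_apply, Matrix.of_apply]
      have : ∀ i, U i j * √(ev j) * (U i k * √(ev k)) = (U i j * U i k) * (√(ev j) * √(ev k)) :=
        fun i => by ring
      rw [Finset.sum_congr rfl fun i _ => this i, ← Finset.sum_mul, h2]
      by_cases hjk : j = k
      · subst hjk; simp [hsq]
      · rw [Matrix.diagonal_apply_ne _ hjk, Matrix.one_apply_ne (fun h => hjk (Subtype.ext h))]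
        simp
    change _ ≤ ((Matrix.of fun (i : Fin d) (j : {i // ev i ≠ 0}) => U i j * Real.sqrt (ev j)) *ᵥ h)
      ⬝ᵥ ((Matrix.of fun (i : Fin d) (j : {i // ev i ≠ 0}) => U i j * Real.sqrt (ev j)) *ᵥ h)
    rw [Matrix.dotProduct_mulVec, Matrix.vecMul_mulVec, hLL]
    simp only [dotProduct, Finset.mul_sum, Matrix.vecMul_diagonal]
    refine Finset.sum_le_sum fun j _ => ?_
    nlinarith [hlb j j.2, mul_self_nonneg (h j)]
  · intro g hg
    refine ⟨fun j => (Uᵀ *ᵥ g) j / Real.sqrt (ev j), ?_⟩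
    have hz : ∀ j, ¬ (ev j ≠ 0) → (Uᵀ *ᵥ g) j = 0 := by
      intro j hj
      simp only [not_not] at hj
      have : A *ᵥ (fun i => U i j) = 0 := by
        have h1 := hA.mulVec_eigenvectorBasis j
        rw [← hev, hj, zero_smul] at h1
        have h2 : (fun i => U i j) = (hA.eigenvectorBasis j).ofLp := by
          ext i; rw [hUd, hA.eigenvectorUnitary_apply]
        rw [h2, h1]
      have := hg _ this
      rw [dotProduct_comm] at this
      exact this
    have hgg : g = U *ᵥ (Uᵀ *ᵥ g) := by rw [Matrix.mulVec_mulVec, hU1, Matrix.one_mulVec]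
    ext i
    conv_rhs => rw [hgg]
    change ∑ j : {i // ev i ≠ 0}, U i j * √(ev j) * ((Uᵀ *ᵥ g) j / √(ev j)) =
      ∑ j, U i j * (Uᵀ *ᵥ g) j
    rw [← pgb_sum_sub (fun j => ev j ≠ 0)]
    · refine Finset.sum_congr rfl fun j _ => ?_
      have := (Real.sqrt_pos.2 (hpos j)).ne'
      field_simp
    · intro j hj; rw [hz j hj, mul_zero]

lemma pgb_det {ι : Type*} [Fintype ι] [DecidableEq ι] (u v : ι → ℝ) :
    det (1 - vecMulVec u v) = 1 - v ⬝ᵥ u := by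
  have := Matrix.det_one_add_replicateCol_mul_replicateRow (ι := Unit) (-u) v
  rw [← vecMulVec_eq] at this
  simpa [sub_eq_add_neg, neg_vecMulVec] using this

lemma pgb_posDef {ι : Type*} [Fintype ι] [DecidableEq ι] (h : ℕ → ι → ℝ) (s : Finset ℕ) :
    (1 + ∑ s ∈ s, vecMulVec (h s) (h s)).PosDef := by
  refine Matrix.PosDef.one.add_posSemidef (Matrix.posSemidef_sum _ fun i _ => ?_)
  simpa using Matrix.posSemidef_vecMulVec_self_star (h i)

lemma pgb_pot {ι : Type*} [Fintype ι] [DecidableEq ι] (h y : ℕ → ι → ℝ) (a b : ℕ) (hab : a ≤ b)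
    (hy : ∀ t ∈ Finset.Ioc a b, (1 + ∑ s ∈ Finset.Ioc a t, vecMulVec (h s) (h s)) *ᵥ y t = h t) :
    ∑ t ∈ Finset.Ioc a b, y t ⬝ᵥ h t ≤
      Real.log (1 + ∑ s ∈ Finset.Ioc a b, vecMulVec (h s) (h s)).det := by
  induction b, hab using Nat.le_induction with
  | base => simp
  | succ b hab ih =>
    have ih := ih fun t ht => hy t (by simp at ht ⊢; omega)
    have hb := hy (b + 1) (by simp; omega)
    rw [Finset.sum_Ioc_succ_top (by omega)]
    set C := (1 + ∑ s ∈ Finset.Ioc a b, vecMulVec (h s) (h s)) with hC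
    set C' := (1 + ∑ s ∈ Finset.Ioc a (b + 1), vecMulVec (h s) (h s)) with hC'
    have e : C' = C + vecMulVec (h (b+1)) (h (b+1)) := by
      rw [hC', Finset.sum_Ioc_succ_top (by omega), hC, add_assoc]
    have e2 : C = C' * (1 - vecMulVec (y (b+1)) (h (b+1))) := by
      rw [mul_sub, mul_one, Matrix.mul_vecMulVec, hb, e]; simp
    have p1 : 0 < C.det := (pgb_posDef h _).det_pos
    have p2 : 0 < C'.det := (pgb_posDef h _).det_pos
    have e3 := congrArg Matrix.det e2
    rw [Matrix.det_mul, pgb_det, dotProduct_comm] at e3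
    have p3 : 0 < 1 - y (b+1) ⬝ᵥ h (b+1) := by
      by_contra hn
      nlinarith
    rw [e3, Real.log_mul p2.ne' p3.ne'] at ih
    have := Real.log_le_sub_one_of_pos p3
    linarith

lemma pgb_amgm {ι : Type*} [Fintype ι] [DecidableEq ι] (hc : 0 < Fintype.card ι)
    (h : ℕ → ι → ℝ) (s : Finset ℕ) :
    Real.log (1 + ∑ s ∈ s, vecMulVec (h s) (h s)).det ≤
      Fintype.card ι * Real.log (1 + (∑ s ∈ s, h s ⬝ᵥ h s) / Fintype.card ι) := by
  have hp := pgb_posDef h s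
  have ht : (1 + ∑ s ∈ s, vecMulVec (h s) (h s)).trace =
      Fintype.card ι + ∑ s ∈ s, h s ⬝ᵥ h s := by
    rw [trace_add, trace_one, trace_sum]; simp [trace_vecMulVec]
  generalize (1 + ∑ s ∈ s, vecMulVec (h s) (h s)) = C at *
  have hd := hp.1.det_eq_prod_eigenvalues
  have htr := hp.1.trace_eq_sum_eigenvalues
  simp only [RCLike.ofReal_real_eq_id, id] at hd htr
  have hcr : (0:ℝ) < Fintype.card ι := by exact_mod_cast hc
  have := pgb_jensen Finset.univ (fun _ : ι => (1:ℝ)) hp.1.eigenvalues (by simp)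
    (fun i _ => hp.eigenvalues_pos i) (by simpa using hcr)
  rw [hd, Real.log_prod (fun i _ => (hp.eigenvalues_pos i).ne')]
  simp only [one_mul, ← htr, ht] at this
  simp only [Finset.sum_const, Finset.card_univ, nsmul_eq_mul, mul_one] at this
  rwa [add_div, div_self hcr.ne'] at this

lemma pgb_quad {d : ℕ} (g : ℕ → Fin d → ℝ) (S : Finset ℕ) (x : Fin d → ℝ) :
    x ⬝ᵥ (∑ s ∈ S, vecMulVec (g s) (g s)) *ᵥ x = ∑ s ∈ S, (g s ⬝ᵥ x) ^ 2 := by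
  rw [Matrix.sum_mulVec, dotProduct_sum]
  refine Finset.sum_congr rfl fun s _ => ?_
  rw [Matrix.vecMulVec_mulVec, op_smul_eq_smul, dotProduct_smul, dotProduct_comm x, smul_eq_mul]
  ring

lemma pgb_ker {d : ℕ} (g : ℕ → Fin d → ℝ) (S : Finset ℕ) (x : Fin d → ℝ) :
    (∑ s ∈ S, vecMulVec (g s) (g s)) *ᵥ x = 0 ↔ ∀ s ∈ S, g s ⬝ᵥ x = 0 := by
  constructor
  · intro h s hs
    have := pgb_quad g S x
    rw [h, dotProduct_zero, eq_comm, Finset.sum_eq_zero_iff_of_nonneg (fun _ _ => sq_nonneg _)]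
      at this
    exact pow_eq_zero_iff (two_ne_zero) |>.1 (this s hs)
  · intro h
    rw [Matrix.sum_mulVec]
    refine Finset.sum_eq_zero fun s hs => ?_
    rw [Matrix.vecMulVec_mulVec, h s hs]; simp

lemma pgb_kerle {d : ℕ} (g : ℕ → Fin d → ℝ) {S S' : Finset ℕ} (h : S ⊆ S') :
    (∑ s ∈ S', vecMulVec (g s) (g s)).mulVecLin.ker ≤
      (∑ s ∈ S, vecMulVec (g s) (g s)).mulVecLin.ker := by
  intro x hx
  rw [LinearMap.mem_ker, Matrix.mulVecLin_apply, pgb_ker] at hx ⊢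
  exact fun s hs => hx s (h hs)

lemma pgb_rank_mono {d : ℕ} (g : ℕ → Fin d → ℝ) {S S' : Finset ℕ} (h : S ⊆ S') :
    (∑ s ∈ S, vecMulVec (g s) (g s)).rank ≤ (∑ s ∈ S', vecMulVec (g s) (g s)).rank := by
  have h1 := Submodule.finrank_mono (pgb_kerle g h)
  have h2 := LinearMap.finrank_range_add_finrank_ker (∑ s ∈ S, vecMulVec (g s) (g s)).mulVecLin
  have h3 := LinearMap.finrank_range_add_finrank_ker (∑ s ∈ S', vecMulVec (g s) (g s)).mulVecLin
  unfold Matrix.rank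
  omega

lemma pgb_rank_eq {d : ℕ} (g : ℕ → Fin d → ℝ) {S S' : Finset ℕ} (h : S ⊆ S')
    (hr : (∑ s ∈ S, vecMulVec (g s) (g s)).rank = (∑ s ∈ S', vecMulVec (g s) (g s)).rank)
    (x : Fin d → ℝ) (hx : (∑ s ∈ S, vecMulVec (g s) (g s)) *ᵥ x = 0) :
    ∀ s ∈ S', g s ⬝ᵥ x = 0 := by
  have h2 := LinearMap.finrank_range_add_finrank_ker (∑ s ∈ S, vecMulVec (g s) (g s)).mulVecLin
  have h3 := LinearMap.finrank_range_add_finrank_ker (∑ s ∈ S', vecMulVec (g s) (g s)).mulVecLin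
  unfold Matrix.rank at hr
  have h4 := Submodule.eq_of_le_of_finrank_eq (pgb_kerle g h) (by omega)
  rw [← pgb_ker]
  have : x ∈ (∑ s ∈ S', vecMulVec (g s) (g s)).mulVecLin.ker := by
    rw [h4]; exact hx
  exact this

lemma pgb_x {d : ℕ} (g : ℕ → Fin d → ℝ) (S : Finset ℕ) (t : ℕ) (ht : t ∈ S)
    (A B : Matrix (Fin d) (Fin d) ℝ) (hA : A = ∑ s ∈ S, vecMulVec (g s) (g s))
    (hAs : Aᵀ = A) (hB : A * B * A = A) :
    A *ᵥ (Bᵀ *ᵥ g t) = g t ∧ (Bᵀ *ᵥ g t) ⬝ᵥ g t = g t ⬝ᵥ B *ᵥ g t := by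
  constructor
  · have h1 : ∀ z, g t ⬝ᵥ (z - (B * A) *ᵥ z) = 0 := by
      intro z
      have : A *ᵥ (z - (B * A) *ᵥ z) = 0 := by
        rw [Matrix.mulVec_sub, Matrix.mulVec_mulVec, ← Matrix.mul_assoc, hB, sub_self]
      rw [hA] at this
      have := (pgb_ker g S _).1 this t ht
      rwa [← hA] at this
    have h2 : A *ᵥ (Bᵀ *ᵥ g t) = g t ᵥ* (B * A) := by
      rw [Matrix.mulVec_mulVec, ← Matrix.mulVec_transpose, Matrix.transpose_mul, hAs]
    rw [h2]
    refine dotProduct_eq _ _ fun z => ?_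
    rw [← Matrix.dotProduct_mulVec]
    have := h1 z
    rw [dotProduct_sub] at this
    linarith
  · rw [Matrix.mulVec_transpose, Matrix.dotProduct_mulVec]

lemma pgb_le_one {d : ℕ} (g : ℕ → Fin d → ℝ) (S : Finset ℕ) (t : ℕ) (ht : t ∈ S)
    (x : Fin d → ℝ) (hx : (∑ s ∈ S, vecMulVec (g s) (g s)) *ᵥ x = g t) : x ⬝ᵥ g t ≤ 1 := by
  have h := pgb_quad g S x
  rw [hx] at h
  have h2 : (g t ⬝ᵥ x) ^ 2 ≤ ∑ s ∈ S, (g s ⬝ᵥ x) ^ 2 :=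
    Finset.single_le_sum (f := fun s => (g s ⬝ᵥ x) ^ 2) (fun _ _ => sq_nonneg _) ht
  rw [← h, dotProduct_comm] at h2
  nlinarith

lemma pgb_phase {d : ℕ} (g x : ℕ → Fin d → ℝ) (a b k : ℕ) (hab : a ≤ b)
    (hH : (∑ s ∈ Finset.Icc 1 a, vecMulVec (g s) (g s)).IsHermitian)
    (lam : ℝ) (hlam : 0 < lam) (hlb : ∀ i, hH.eigenvalues i ≠ 0 → lam ≤ hH.eigenvalues i)
    (hk : 0 < k) (hra : (∑ s ∈ Finset.Icc 1 a, vecMulVec (g s) (g s)).rank = k)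
    (hrb : (∑ s ∈ Finset.Icc 1 b, vecMulVec (g s) (g s)).rank = k)
    (hx : ∀ t ∈ Finset.Ioc a b, (∑ s ∈ Finset.Icc 1 t, vecMulVec (g s) (g s)) *ᵥ x t = g t) :
    ∑ t ∈ Finset.Ioc a b, x t ⬝ᵥ g t ≤
      k * Real.log (1 + (∑ t ∈ Finset.Ioc a b, g t ⬝ᵥ g t) / (k * lam)) := by
  obtain ⟨L, hL1, hL2, hL3⟩ := pgb_factor _ hH lam hlam hlb
  have hcard : Fintype.card {i // hH.eigenvalues i ≠ 0} = k := by
    rw [← hra, hH.rank_eq_card_non_zero_eigs]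
  have hh : ∀ t, ∃ h, t ∈ Finset.Ioc a b → L *ᵥ h = g t := by
    intro t
    by_cases ht : t ∈ Finset.Ioc a b
    · obtain ⟨h, hh⟩ := hL3 (g t) (fun z hz =>
        pgb_rank_eq g (Finset.Icc_subset_Icc_right hab) (hra.trans hrb.symm) z hz t
          (by simp at ht ⊢; omega))
      exact ⟨h, fun _ => hh⟩
    · exact ⟨0, fun h => absurd h ht⟩
  choose h hh using hh
  have hLinj : ∀ u v, L *ᵥ u = L *ᵥ v → u = v := by
    intro u v huv
    have h1 := hL2 (u - v)
    rw [Matrix.mulVec_sub, huv, sub_self, dotProduct_zero] at h1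
    have h2 : (u - v) ⬝ᵥ (u - v) = 0 :=
      le_antisymm (by nlinarith) (Finset.sum_nonneg fun i _ => mul_self_nonneg _)
    exact sub_eq_zero.1 (dotProduct_self_eq_zero.1 h2)
  have hC : ∀ t ∈ Finset.Ioc a b,
      (1 + ∑ s ∈ Finset.Ioc a t, vecMulVec (h s) (h s)) *ᵥ (Lᵀ *ᵥ x t) = h t := by
    intro t ht
    apply hLinj
    rw [hh t ht, ← hx t ht, Matrix.mulVec_mulVec, Matrix.mulVec_mulVec]
    congr 1
    rw [Matrix.mul_add, Matrix.add_mul, Matrix.mul_one, hL1, Matrix.mul_sum, Matrix.sum_mul]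
    have hsplit : Finset.Icc 1 t = Finset.Icc 1 a ∪ Finset.Ioc a t := by
      ext s; simp at ht ⊢; omega
    rw [hsplit, Finset.sum_union]
    · congr 1
      refine Finset.sum_congr rfl fun s hs => ?_
      rw [Matrix.mul_vecMulVec, Matrix.vecMulVec_mul, Matrix.vecMul_transpose, hh s]
      simp at hs ht ⊢; omega
    · rw [Finset.disjoint_left]; intro s; simp; omega
  have h1 := pgb_pot h (fun t => Lᵀ *ᵥ x t) a b hab hC
  have h2 := pgb_amgm (by omega) h (Finset.Ioc a b)
  have h3 : ∀ t ∈ Finset.Ioc a b, x t ⬝ᵥ g t = (Lᵀ *ᵥ x t) ⬝ᵥ h t := by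
    intro t ht
    rw [← hh t ht, Matrix.dotProduct_mulVec, Matrix.mulVec_transpose]
  rw [Finset.sum_congr rfl h3]
  refine (h1.trans h2).trans ?_
  rw [hcard]
  have hk' : (0:ℝ) < k := by exact_mod_cast hk
  have hs0 : 0 ≤ ∑ s ∈ Finset.Ioc a b, h s ⬝ᵥ h s :=
    Finset.sum_nonneg fun s _ => Finset.sum_nonneg fun i _ => mul_self_nonneg _
  have hle : lam * ∑ s ∈ Finset.Ioc a b, h s ⬝ᵥ h s ≤ ∑ s ∈ Finset.Ioc a b, g s ⬝ᵥ g s := by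
    rw [Finset.mul_sum]
    refine Finset.sum_le_sum fun s hs => ?_
    rw [← hh s hs]; exact hL2 _
  have : (∑ s ∈ Finset.Ioc a b, h s ⬝ᵥ h s) / k ≤
      (∑ s ∈ Finset.Ioc a b, g s ⬝ᵥ g s) / (k * lam) := by
    rw [div_le_div_iff₀ hk' (by positivity)]
    nlinarith
  gcongr

theorem pseudoinverse_gradient_bound
    (d T : ℕ) (g : ℕ → Fin d → ℝ)
    (hgne : ∀ t ∈ Finset.Icc 1 T, g t ≠ 0)
    (Ahat : ℕ → Matrix (Fin d) (Fin d) ℝ)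
    (hAhat : ∀ t, Ahat t = ∑ s ∈ Finset.Icc 1 t, Matrix.vecMulVec (g s) (g s))
    (hHerm : ∀ t, (Ahat t).IsHermitian)
    (B : ℕ → Matrix (Fin d) (Fin d) ℝ)
    (hB : ∀ t ∈ Finset.Icc 1 T,
      Ahat t * B t * Ahat t = Ahat t ∧ B t * Ahat t * B t = B t ∧
      (Ahat t * B t)ᵀ = Ahat t * B t ∧ (B t * Ahat t)ᵀ = B t * Ahat t)
    (lam : ℝ) (hlam : 0 < lam)
    (hlamlb : ∀ t ∈ Finset.Icc 1 T, ∀ i : Fin d,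
      (hHerm t).eigenvalues i ≠ 0 → lam ≤ (hHerm t).eigenvalues i)
    (r : ℕ) (hr : r = (Ahat T).rank) :
    ∑ t ∈ Finset.Icc 1 T, g t ⬝ᵥ (B t).mulVec (g t) ≤
      (r : ℝ) + (1 + (r : ℝ)) * r / 2 *
        Real.log (1 + 2 * (∑ t ∈ Finset.Icc 1 T, g t ⬝ᵥ g t) / ((1 + (r : ℝ)) * r * lam)) := by
  obtain rfl : Ahat = fun t => ∑ s ∈ Finset.Icc 1 t, Matrix.vecMulVec (g s) (g s) := funext hAhat
  set A : ℕ → Matrix (Fin d) (Fin d) ℝ :=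
    fun t => ∑ s ∈ Finset.Icc 1 t, Matrix.vecMulVec (g s) (g s) with hAdef
  have hgg : ∀ t, 0 ≤ g t ⬝ᵥ g t := fun t => Finset.sum_nonneg fun i _ => mul_self_nonneg _
  have hx : ∀ t ∈ Finset.Icc 1 T, A t *ᵥ ((B t)ᵀ *ᵥ g t) = g t ∧
      ((B t)ᵀ *ᵥ g t) ⬝ᵥ g t = g t ⬝ᵥ B t *ᵥ g t := by
    intro t ht
    refine pgb_x g (Finset.Icc 1 t) t (by simp at ht ⊢; omega) (A t) (B t) rfl ?_ (hB t ht).1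
    rw [← conjTranspose_eq_transpose_of_trivial]; exact hHerm t
  have hmono : ∀ s t, s ≤ t → (A s).rank ≤ (A t).rank := fun s t hst =>
    pgb_rank_mono g (Finset.Icc_subset_Icc_right hst)
  have hmaps : ∀ t ∈ Finset.Icc 1 T, (A t).rank ∈ Finset.Icc 1 r := by
    intro t ht
    have h1 : (A t).rank ≤ r := hr ▸ hmono t T (Finset.mem_Icc.1 ht).2
    have h2 : (A t).rank ≠ 0 := by
      intro h0
      have h3 : (A t).mulVecLin.range = ⊥ := Submodule.finrank_eq_zero.1 h0
      have h4 : g t ∈ (A t).mulVecLin.range := ⟨_, (hx t ht).1⟩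
      rw [h3] at h4
      exact hgne t ht ((Submodule.mem_bot ℝ).1 h4)
    simp; omega
  have hphase : ∀ k ∈ Finset.Icc 1 r,
      ∑ t ∈ Finset.Icc 1 T with (A t).rank = k, g t ⬝ᵥ B t *ᵥ g t ≤
      1 + k * Real.log (1 + (∑ t ∈ Finset.Icc 1 T with (A t).rank = k, g t ⬝ᵥ g t) / (k * lam)) := by
    intro k hk
    have hk1 : 1 ≤ k := (Finset.mem_Icc.1 hk).1
    have hk' : (0:ℝ) < k := by exact_mod_cast hk1
    set F := (Finset.Icc 1 T).filter (fun t => (A t).rank = k) with hF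
    by_cases hne : F.Nonempty
    · obtain ⟨a, ha⟩ : ∃ a, a = F.min' hne := ⟨_, rfl⟩
      obtain ⟨b, hb⟩ : ∃ b, b = F.max' hne := ⟨_, rfl⟩
      have haF : a ∈ F := ha ▸ F.min'_mem hne
      have hbF : b ∈ F := hb ▸ F.max'_mem hne
      have hab : a ≤ b := hb ▸ F.le_max' a haF
      have haF' := haF
      have hbF' := hbF
      simp only [hF, Finset.mem_filter, Finset.mem_Icc] at haF' hbF'
      have hFe : F = insert a (Finset.Ioc a b) := by
        ext t
        simp only [Finset.mem_insert, Finset.mem_Ioc]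
        constructor
        · intro ht
          have h1 : a ≤ t := ha ▸ F.min'_le t ht
          have h2 : t ≤ b := hb ▸ F.le_max' t ht
          omega
        · rintro (rfl | ⟨h1, h2⟩)
          · exact haF
          · have h3 := hmono a t h1.le
            have h4 := hmono t b h2
            simp only [hF, Finset.mem_filter, Finset.mem_Icc]
            omega
      have hIoc : ∀ t ∈ Finset.Ioc a b, t ∈ Finset.Icc 1 T := by
        intro t ht; simp at ht ⊢; omega
      have haT : a ∈ Finset.Icc 1 T := Finset.mem_Icc.2 haF'.1
      have hp := pgb_phase g (fun t => (B t)ᵀ *ᵥ g t) a b k hab (hHerm a) lam hlam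
        (hlamlb a haT) hk1 haF'.2 hbF'.2 (fun t ht => (hx t (hIoc t ht)).1)
      rw [Finset.sum_congr rfl fun t ht => (hx t (hIoc t ht)).2] at hp
      have h1 := pgb_le_one g (Finset.Icc 1 a) a (by simp; omega) _ (hx a haT).1
      rw [(hx a haT).2] at h1
      rw [hFe, Finset.sum_insert (by simp), Finset.sum_insert (by simp)]
      have hs0 : 0 ≤ ∑ t ∈ Finset.Ioc a b, g t ⬝ᵥ g t := Finset.sum_nonneg fun t _ => hgg t
      have : (k:ℝ) * Real.log (1 + (∑ t ∈ Finset.Ioc a b, g t ⬝ᵥ g t) / (k * lam)) ≤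
          k * Real.log (1 + (g a ⬝ᵥ g a + ∑ t ∈ Finset.Ioc a b, g t ⬝ᵥ g t) / (k * lam)) := by
        have := hgg a
        gcongr
        linarith
      linarith
    · rw [Finset.not_nonempty_iff_eq_empty.1 hne]; simp
  rw [← Finset.sum_fiberwise_of_maps_to hmaps (fun t => g t ⬝ᵥ B t *ᵥ g t)]
  refine (Finset.sum_le_sum hphase).trans ?_
  rw [Finset.sum_add_distrib]
  simp only [Finset.sum_const, Nat.card_Icc, Nat.add_sub_cancel, nsmul_eq_mul, mul_one]
  rcases Nat.eq_zero_or_pos r with h0 | hrpos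
  · simp [h0]
  have hr' : (0:ℝ) < r := by exact_mod_cast hrpos
  have hW : ∀ n : ℕ, ∑ k ∈ Finset.Icc 1 n, (k:ℝ) = (1 + (n:ℝ)) * n / 2 := by
    intro n
    induction n with
    | zero => simp
    | succ n ih => rw [Finset.sum_Icc_succ_top (by omega), ih]; push_cast; ring
  have hj := pgb_jensen (Finset.Icc 1 r) (fun k => (k:ℝ)) (fun k => 1 +
    (∑ t ∈ Finset.Icc 1 T with (A t).rank = k, g t ⬝ᵥ g t) / (k * lam))
    (fun k _ => by positivity)
    (fun k _ => by
      have : 0 ≤ ∑ t ∈ Finset.Icc 1 T with (A t).rank = k, g t ⬝ᵥ g t :=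
        Finset.sum_nonneg fun t _ => hgg t
      positivity) (by rw [hW]; positivity)
  have hsum : ∑ k ∈ Finset.Icc 1 r, (k:ℝ) * (1 +
      (∑ t ∈ Finset.Icc 1 T with (A t).rank = k, g t ⬝ᵥ g t) / (k * lam)) =
      (1 + (r:ℝ)) * r / 2 + (∑ t ∈ Finset.Icc 1 T, g t ⬝ᵥ g t) / lam := by
    rw [← hW r, ← Finset.sum_fiberwise_of_maps_to hmaps (fun t => g t ⬝ᵥ g t), Finset.sum_div,
      ← Finset.sum_add_distrib]
    refine Finset.sum_congr rfl fun k hk => ?_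
    have hk' : (0:ℝ) < k := by exact_mod_cast (Finset.mem_Icc.1 hk).1
    field_simp
  simp only [hsum, hW] at hj
  have he : ((1 + (r:ℝ)) * r / 2 + (∑ t ∈ Finset.Icc 1 T, g t ⬝ᵥ g t) / lam) /
      ((1 + (r:ℝ)) * r / 2) =
      1 + 2 * (∑ t ∈ Finset.Icc 1 T, g t ⬝ᵥ g t) / ((1 + (r : ℝ)) * r * lam) := by
    field_simp
  rw [he] at hj
  linarith
end

section
/- Consider the truly invariant online Newton algorithm: A_t = Σ_{s=1}^t (σ_s + η_s) g_s g_s^⊤ with g_t = ∇f_t(w_t), iterates w_1 = 0, u_{t+1} = w_t − A_t^† g_t and w_{t+1} = argmin_{w ∈ K_{t+1}} ‖w − u_{t+1}‖_{A_t}, where A_t^† is the Moore–Penrose pseudoinverse of A_t. Suppose the losses satisfy the Scalar Lipschitz and Curvature assumptions with σ_t = 0 for all t, and set η_t = (1/(CL))·√(d/t). Let λ* be the minimum among the smallest nonzero eigenvalues of Â_t = Σ_{s=1}^t g_s g_s^⊤ over t = 1,...,T, and let r be the rank of Â_T. Then for every w ∈ K, R_T(w) ≤ (CL/2)·√(T/d)·(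 r + ((1+r)r/2)·ln(1 + 2 Σ_{t=1}^T ‖g_t‖₂² / ((1+r) r λ*)) ) + 4 C L √(Td). -/
open Matrix Finset

lemma aux_mulVec {d : ℕ} (S : Finset ℕ) (c : ℕ → ℝ) (g : ℕ → Fin d → ℝ) (v : Fin d → ℝ) :
    (∑ s ∈ S, c s • vecMulVec (g s) (g s)) *ᵥ v = ∑ s ∈ S, (c s * (g s ⬝ᵥ v)) • g s := by
  rw [Matrix.sum_mulVec]
  refine Finset.sum_congr rfl fun s _ => ?_
  rw [smul_mulVec, vecMulVec_mulVec, mul_smul]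
  simp

lemma aux_quad {d : ℕ} (S : Finset ℕ) (c : ℕ → ℝ) (g : ℕ → Fin d → ℝ) (v v' : Fin d → ℝ) :
    v ⬝ᵥ ((∑ s ∈ S, c s • vecMulVec (g s) (g s)) *ᵥ v')
      = ∑ s ∈ S, c s * ((g s ⬝ᵥ v) * (g s ⬝ᵥ v')) := by
  rw [aux_mulVec, dotProduct_sum]
  refine Finset.sum_congr rfl fun s _ => ?_
  rw [dotProduct_smul, smul_eq_mul, dotProduct_comm v]; ring

lemma aux_mulVec1 {d : ℕ} (S : Finset ℕ) (g : ℕ → Fin d → ℝ) (v : Fin d → ℝ) :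
    (∑ s ∈ S, vecMulVec (g s) (g s)) *ᵥ v = ∑ s ∈ S, (g s ⬝ᵥ v) • g s := by
  simpa using aux_mulVec S (fun _ => 1) g v

lemma aux_quad1 {d : ℕ} (S : Finset ℕ) (g : ℕ → Fin d → ℝ) (v v' : Fin d → ℝ) :
    v ⬝ᵥ ((∑ s ∈ S, vecMulVec (g s) (g s)) *ᵥ v')
      = ∑ s ∈ S, (g s ⬝ᵥ v) * (g s ⬝ᵥ v') := by
  simpa using aux_quad S (fun _ => 1) g v v'

lemma aux_det {ι : Type*} [Fintype ι] [DecidableEq ι] (H : Matrix ι ι ℝ) (hH : H.IsHermitian) :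
    (1 + H).det = ∏ i, (1 + hH.eigenvalues i) := by
  have h := congrArg (Polynomial.eval (-1)) hH.charpoly_eq
  rw [Matrix.eval_charpoly, Polynomial.eval_prod] at h
  have e1 : (scalar ι (-1 : ℝ)) - H = -(1 + H) := by
    simp only [map_neg, map_one]; abel
  rw [e1, det_neg] at h
  have e2 : ∀ i, Polynomial.eval (-1) (Polynomial.X - Polynomial.C (hH.eigenvalues i : ℝ))
      = (-1) * (1 + hH.eigenvalues i) := by
    intro i; simp; ring
  simp only [RCLike.ofReal_real_eq_id, id] at h
  rw [Finset.prod_congr rfl (fun i _ => e2 i), Finset.prod_mul_distrib] at h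
  simp only [Finset.prod_const, Finset.card_univ] at h
  exact mul_left_cancel₀ (pow_ne_zero _ (by norm_num)) h

lemma aux_theta {c : ℝ} (hc : 0 ≤ c) : 0 ≤ Real.log (1 + c) - c / (1 + c) := by
  have h := Real.one_sub_inv_le_log_of_pos (show 0 < 1 + c by linarith)
  have : c / (1 + c) = 1 - (1 + c)⁻¹ := by field_simp; ring
  linarith

lemma aux_logdet {ι : Type*} [Fintype ι] [DecidableEq ι] (H : Matrix ι ι ℝ) (hH : H.PosSemidef)
    (k : ℕ) (hk : H.rank ≤ k) (c : ℝ) (hc : 0 ≤ c) :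
    Real.log (1 + H).det ≤ k * (Real.log (1 + c) - c / (1 + c)) + H.trace / (1 + c) := by
  classical
  have hn := hH.eigenvalues_nonneg
  rw [aux_det H hH.1, Real.log_prod (fun i _ => by have := hn i; positivity)]
  have htr : H.trace = ∑ i, hH.1.eigenvalues i := by
    simpa using hH.1.trace_eq_sum_eigenvalues
  have hpt : ∀ i, Real.log (1 + hH.1.eigenvalues i) ≤
      (if hH.1.eigenvalues i ≠ 0 then (Real.log (1 + c) - c / (1 + c)) else 0)
        + hH.1.eigenvalues i / (1 + c) := by
    intro i
    split_ifs with h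
    · have hi := hn i
      have h1 := Real.log_le_sub_one_of_pos
        (show 0 < (1 + hH.1.eigenvalues i) / (1 + c) by positivity)
      rw [Real.log_div (by positivity) (by positivity)] at h1
      have : (1 + hH.1.eigenvalues i) / (1 + c) - 1
        = - (c / (1 + c)) + hH.1.eigenvalues i / (1 + c) := by field_simp; ring
      linarith
    · push Not at h
      simp [h]
  calc _ ≤ _ := Finset.sum_le_sum fun i _ => hpt i
    _ = H.rank * (Real.log (1 + c) - c / (1 + c)) + H.trace / (1 + c) := by
      rw [Finset.sum_add_distrib, ← Finset.sum_div, ← htr, ← Finset.sum_filter,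
        hH.1.rank_eq_card_non_zero_eigs, Fintype.card_subtype]
      simp
      ring
    _ ≤ _ := by
      have := aux_theta hc
      gcongr

lemma aux_gap {ι : Type*} [Fintype ι] [DecidableEq ι] (S : Matrix ι ι ℝ) (hS : S.IsHermitian)
    (lam : ℝ) (hl : 0 < lam)
    (h : ∀ i, hS.eigenvalues i ≠ 0 → lam ≤ hS.eigenvalues i) (v : ι → ℝ) :
    lam * (v ⬝ᵥ S *ᵥ v) ≤ (S *ᵥ v) ⬝ᵥ (S *ᵥ v) := by
  set U : Matrix ι ι ℝ := (hS.eigenvectorUnitary : Matrix ι ι ℝ) with hU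
  have hUU : Uᵀ * U = 1 := by
    have := Unitary.coe_star_mul_self hS.eigenvectorUnitary
    simpa [star_eq_conjTranspose] using this
  have hsp : S = U * diagonal hS.eigenvalues * Uᵀ := by
    have := hS.spectral_theorem
    rw [Unitary.conjStarAlgAut_apply] at this
    simpa [star_eq_conjTranspose, Function.comp_def] using this
  set y := Uᵀ *ᵥ v with hy
  have h1 : S *ᵥ v = U *ᵥ (diagonal hS.eigenvalues *ᵥ y) := by
    conv_lhs => rw [hsp]
    simp [hy, mulVec_mulVec, Matrix.mul_assoc]
  have h2 : v ⬝ᵥ S *ᵥ v = ∑ i, hS.eigenvalues i * y i ^ 2 := by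
    rw [h1, dotProduct_mulVec, ← mulVec_transpose, ← hy]
    simp only [dotProduct, mulVec_diagonal]
    exact Finset.sum_congr rfl fun i _ => by ring
  have h3 : (S *ᵥ v) ⬝ᵥ (S *ᵥ v) = ∑ i, hS.eigenvalues i ^ 2 * y i ^ 2 := by
    rw [h1, dotProduct_mulVec, ← mulVec_transpose, mulVec_mulVec, hUU, one_mulVec]
    simp only [dotProduct, mulVec_diagonal]
    exact Finset.sum_congr rfl fun i _ => by ring
  rw [h2, h3, Finset.mul_sum]
  refine Finset.sum_le_sum fun i _ => ?_
  by_cases h0 : hS.eigenvalues i = 0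
  · simp [h0]
  · have := h i h0
    rw [← mul_assoc]
    apply mul_le_mul_of_nonneg_right _ (sq_nonneg _)
    nlinarith

lemma aux_stage {d : ℕ} (g : ℕ → Fin d → ℝ) (N : Matrix (Fin d) (Fin d) ℝ)
    (B : ℕ → Matrix (Fin d) (Fin d) ℝ)
    (hB : ∀ t, B t = ∑ s ∈ Finset.Icc 1 t, vecMulVec (g s) (g s))
    (hNT : Nᵀ = N) (hNN : N * N = N) (a b : ℕ) (hab : a ≤ b)
    (hNg : ∀ s ∈ Finset.Icc 1 b, N *ᵥ g s = 0)
    (hker : ∀ v, (∀ s ∈ Finset.Icc 1 a, g s ⬝ᵥ v = 0) → N *ᵥ v = 0 → v = 0)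
    (lam : ℝ) (hl : 0 < lam)
    (hgap : ∀ v, lam * (v ⬝ᵥ B a *ᵥ v) ≤ (B a *ᵥ v) ⬝ᵥ (B a *ᵥ v))
    (q : ℕ → ℝ) (hq : ∀ t ∈ Finset.Ioc a b, ∀ m, B t *ᵥ m = g t → q t ≤ g t ⬝ᵥ m)
    (c : ℝ) (hc : 0 ≤ c) :
    ∑ t ∈ Finset.Ioc a b, q t ≤ (B a).rank * (Real.log (1 + c) - c / (1 + c))
      + (∑ t ∈ Finset.Ioc a b, g t ⬝ᵥ g t) / lam / (1 + c) := by
  have hNquad : ∀ v, v ⬝ᵥ N *ᵥ v = (N *ᵥ v) ⬝ᵥ (N *ᵥ v) := by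
    intro v
    conv_lhs => rw [← hNN, ← mulVec_mulVec, dotProduct_mulVec, ← mulVec_transpose, hNT]
  have hBq : ∀ t v v', v ⬝ᵥ B t *ᵥ v' = ∑ s ∈ Finset.Icc 1 t, (g s ⬝ᵥ v) * (g s ⬝ᵥ v') := by
    intro t v v'; rw [hB, aux_quad1]
  have hBT : ∀ t, (B t)ᵀ = B t := by
    intro t; rw [hB, transpose_sum]
    exact Finset.sum_congr rfl fun s _ => by rw [transpose_vecMulVec]
  have hNB : ∀ t ≤ b, N * B t = 0 := by
    intro t ht
    rw [hB, Finset.mul_sum]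
    refine Finset.sum_eq_zero fun s hs => ?_
    rw [mul_vecMulVec, hNg s (by simp at hs ⊢; omega), zero_vecMulVec]
  set M : ℕ → Matrix (Fin d) (Fin d) ℝ := fun t => B t + N with hM
  have hMpos : ∀ t, a ≤ t → (M t).PosDef := by
    intro t ht
    refine PosDef.of_dotProduct_mulVec_pos ?_ ?_
    · show (M t)ᴴ = M t
      simp [hM, conjTranspose_eq_transpose_of_trivial, hBT, hNT]
    · intro v hv
      simp only [star_trivial, hM, add_mulVec, dotProduct_add]
      rw [hBq, hNquad]
      have h1 : ∀ s ∈ Finset.Icc 1 t, 0 ≤ (g s ⬝ᵥ v) * (g s ⬝ᵥ v) := fun s _ => mul_self_nonneg _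
      have h2 : 0 ≤ (N *ᵥ v) ⬝ᵥ (N *ᵥ v) := Finset.sum_nonneg fun i _ => mul_self_nonneg _
      have h3 := Finset.sum_nonneg h1
      by_contra hcon
      have h4 : ∑ s ∈ Finset.Icc 1 t, (g s ⬝ᵥ v) * (g s ⬝ᵥ v) = 0 := by linarith
      have h5 : (N *ᵥ v) ⬝ᵥ (N *ᵥ v) = 0 := by linarith
      rw [Finset.sum_eq_zero_iff_of_nonneg h1] at h4
      apply hv
      apply hker v
      · intro s hs
        exact mul_self_eq_zero.mp (h4 s (by simp at hs ⊢; omega))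
      · exact dotProduct_self_eq_zero.mp h5
  have hMinv : ∀ t, a ≤ t → M t * (M t)⁻¹ = 1 := fun t ht =>
    mul_nonsing_inv _ (isUnit_iff_ne_zero.mpr (hMpos t ht).det_pos.ne')
  have hsolve : ∀ t, a ≤ t → t ≤ b → ∀ v, N *ᵥ v = 0 → B t *ᵥ ((M t)⁻¹ *ᵥ v) = v := by
    intro t h1 h2 v hv
    have e : M t *ᵥ ((M t)⁻¹ *ᵥ v) = v := by rw [mulVec_mulVec, hMinv t h1, one_mulVec]
    have e2 : N *ᵥ ((M t)⁻¹ *ᵥ v) = 0 := by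
      have := congrArg (fun z => N *ᵥ z) e
      simp only [hM] at this
      rw [hv, mulVec_mulVec, Matrix.mul_add, hNB t h2, hNN, zero_add] at this
      exact this
    have e3 := e
    simp only [hM, add_mulVec] at e3
    simp only [hM] at e2
    rw [e2, add_zero] at e3
    exact e3
  have hBsucc : ∀ t, M (t + 1) = M t + vecMulVec (g (t + 1)) (g (t + 1)) := by
    intro t
    simp only [hM]
    rw [hB, hB, Finset.sum_Icc_succ_top (by omega)]; abel
  have htel : ∀ t, a ≤ t → t ≤ b → ∑ s ∈ Finset.Ioc a t, q s ≤
      Real.log (M t).det - Real.log (M a).det := by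
    intro t hat
    induction t, hat using Nat.le_induction with
    | base => simp
    | succ t hat ih =>
      intro htb
      rw [Finset.sum_Ioc_succ_top hat]
      have ih' := ih (by omega)
      set m := (M (t + 1))⁻¹ *ᵥ g (t + 1) with hm
      have hqm := hq (t + 1) (by simp; omega) m
        (hsolve (t + 1) (by omega) htb _ (hNg _ (by simp; omega)))
      have hdet : (M t).det = (M (t + 1)).det * (1 - g (t + 1) ⬝ᵥ m) := by
        have e : M t = M (t + 1) * (1 + replicateCol Unit (-m) * replicateRow Unit (g (t+1))) := by
          rw [Matrix.mul_add, Matrix.mul_one, ← vecMulVec_eq, mul_vecMulVec, mulVec_neg, hm,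
            mulVec_mulVec, hMinv (t + 1) (by omega), one_mulVec, neg_vecMulVec, hBsucc]
          abel
        rw [e, det_mul, det_one_add_replicateCol_mul_replicateRow, dotProduct_neg]
        ring
      have p1 := (hMpos t hat).det_pos
      have p2 := (hMpos (t + 1) (by omega)).det_pos
      have p3 : 0 < 1 - g (t + 1) ⬝ᵥ m := by
        rw [hdet] at p1
        exact (mul_pos_iff_of_pos_left p2).mp p1
      have : Real.log (M t).det ≤ Real.log (M (t + 1)).det - g (t + 1) ⬝ᵥ m := by
        rw [hdet, Real.log_mul p2.ne' p3.ne']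
        have := Real.log_le_sub_one_of_pos p3
        linarith
      linarith
  refine (htel b hab le_rfl).trans ?_
  set G : Matrix (Fin d) (Finset.Ioc a b) ℝ := Matrix.of fun i s => g s i with hG
  have hMb : M b = M a + G * Gᵀ := by
    have e : B b = B a + G * Gᵀ := by
      have e1 : G * Gᵀ = ∑ s ∈ Finset.Ioc a b, vecMulVec (g s) (g s) := by
        ext i j
        rw [Matrix.mul_apply, Matrix.sum_apply]
        simp only [hG, vecMulVec_apply, transpose_apply, of_apply]
        exact Finset.sum_coe_sort (Finset.Ioc a b) (fun c => g c i * g c j)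
      rw [e1, hB, hB]
      have : Finset.Icc 1 b = Finset.Icc 1 a ∪ Finset.Ioc a b := by
        ext s; simp; omega
      rw [this, Finset.sum_union]
      rw [Finset.disjoint_left]; intro s; simp; omega
    simp only [hM]; rw [e]; abel
  have pa := (hMpos a le_rfl)
  have hdet : (M b).det = (M a).det * (1 + Gᵀ * (M a)⁻¹ * G).det := by
    have e : M b = M a * (1 + ((M a)⁻¹ * G) * Gᵀ) := by
      rw [Matrix.mul_add, Matrix.mul_one, ← Matrix.mul_assoc, ← Matrix.mul_assoc, hMinv a le_rfl,
        Matrix.one_mul, hMb]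
    rw [e, det_mul, det_one_add_mul_comm, Matrix.mul_assoc]
  have hH : (Gᵀ * (M a)⁻¹ * G).PosSemidef := by
    have := pa.inv.posSemidef.conjTranspose_mul_mul_same G
    simpa [conjTranspose_eq_transpose_of_trivial] using this
  have hcol : ∀ s : Finset.Ioc a b, N *ᵥ g s = 0 := by
    rintro ⟨s, hs⟩
    exact hNg s (by simp at hs ⊢; omega)
  have hGB : B a * ((M a)⁻¹ * G) = G := by
    ext i s
    have := congrFun (hsolve a le_rfl hab _ (hcol s)) i
    rw [mulVec_mulVec] at this
    rw [← Matrix.mul_assoc]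
    exact this
  have hrank : (Gᵀ * (M a)⁻¹ * G).rank ≤ (B a).rank := by
    have h1 : (Gᵀ * (M a)⁻¹ * G).rank ≤ G.rank := rank_mul_le_right _ _
    have h2 : (B a * ((M a)⁻¹ * G)).rank ≤ (B a).rank := rank_mul_le_left _ _
    rw [hGB] at h2
    exact h1.trans h2
  have htr : (Gᵀ * (M a)⁻¹ * G).trace ≤ (∑ t ∈ Finset.Ioc a b, g t ⬝ᵥ g t) / lam := by
    rw [Matrix.trace, Finset.sum_div, ← Finset.sum_coe_sort (Finset.Ioc a b)]
    refine Finset.sum_le_sum fun s _ => ?_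
    set m := (M a)⁻¹ *ᵥ g s with hm
    have e1 : (Gᵀ * (M a)⁻¹ * G).diag s = g s ⬝ᵥ m := by
      rw [Matrix.mul_assoc]; rfl
    have e2 := hsolve a le_rfl hab _ (hcol s)
    have e3 := hgap m
    rw [e2] at e3
    rw [e1, le_div_iff₀ hl, dotProduct_comm]
    linarith
  have hfin := aux_logdet _ hH _ hrank c hc
  have hpos : 0 < (1 + Gᵀ * (M a)⁻¹ * G).det := by
    have p := (hMpos b hab).det_pos
    rw [hdet] at p
    exact (mul_pos_iff_of_pos_left pa.det_pos).mp p
  rw [hdet, Real.log_mul pa.det_pos.ne' hpos.ne']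
  have : (Gᵀ * (M a)⁻¹ * G).trace / (1 + c) ≤
    (∑ t ∈ Finset.Ioc a b, g t ⬝ᵥ g t) / lam / (1 + c) := by gcongr
  linarith

lemma aux_proj {d : ℕ} (A : Matrix (Fin d) (Fin d) ℝ) (hAT : Aᵀ = A)
    (hpos : ∀ v, 0 ≤ v ⬝ᵥ A *ᵥ v) (w u wc : Fin d → ℝ)
    (h : ∀ ε : ℝ, 0 ≤ ε → ε ≤ 1 → Real.sqrt ((w - u) ⬝ᵥ A *ᵥ (w - u)) ≤
      Real.sqrt ((w + ε • (wc - w) - u) ⬝ᵥ A *ᵥ (w + ε • (wc - w) - u))) :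
    (w - wc) ⬝ᵥ A *ᵥ (w - wc) ≤ (u - wc) ⬝ᵥ A *ᵥ (u - wc) := by
  have hsym : ∀ p q : Fin d → ℝ, p ⬝ᵥ A *ᵥ q = q ⬝ᵥ A *ᵥ p := by
    intro p q
    rw [dotProduct_mulVec, ← mulVec_transpose, hAT, dotProduct_comm]
  set D := wc - w with hD
  set E := w - u with hE
  have e1 : ∀ ε : ℝ, (w + ε • D - u) ⬝ᵥ A *ᵥ (w + ε • D - u)
      = E ⬝ᵥ A *ᵥ E + 2 * ε * (E ⬝ᵥ A *ᵥ D) + ε ^ 2 * (D ⬝ᵥ A *ᵥ D) := by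
    intro ε
    have : w + ε • D - u = E + ε • D := by rw [hE]; abel
    rw [this]
    simp only [mulVec_add, mulVec_smul, dotProduct_add, add_dotProduct, dotProduct_smul,
      smul_dotProduct, smul_eq_mul]
    rw [hsym D E]; ring
  have hb : 0 ≤ E ⬝ᵥ A *ᵥ D := by
    by_contra hcon
    push Not at hcon
    have hQ := hpos D
    set b := E ⬝ᵥ A *ᵥ D
    set Q := D ⬝ᵥ A *ᵥ D
    set ε := min 1 (-b / (Q + 1)) with hε
    have hε0 : 0 < ε := lt_min one_pos (div_pos (by linarith) (by linarith))
    have h1 := h ε hε0.le (min_le_left _ _)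
    rw [Real.sqrt_le_sqrt_iff (hpos _), e1] at h1
    have h2 : ε * (Q + 1) ≤ -b := by
      rw [← le_div_iff₀ (by linarith)]; exact min_le_right _ _
    have h3 : 0 ≤ ε * (2 * b + ε * Q) := by nlinarith
    have h4 := (mul_nonneg_iff_of_pos_left hε0).mp h3
    nlinarith
  have e2 : u - wc = -(E + D) := by rw [hE, hD]; abel
  have e3 : w - wc = -D := by rw [hD]; abel
  have e4 : (E + D) ⬝ᵥ A *ᵥ (E + D) = E ⬝ᵥ A *ᵥ E + 2 * (E ⬝ᵥ A *ᵥ D) + D ⬝ᵥ A *ᵥ D := by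
    simp only [mulVec_add, dotProduct_add, add_dotProduct]
    rw [hsym D E]; ring
  rw [e2, e3, mulVec_neg, mulVec_neg, neg_dotProduct_neg, neg_dotProduct_neg, e4]
  have := hpos E
  linarith

lemma aux_sqrt (T : ℕ) : ∑ t ∈ Finset.Icc 1 T, 1 / Real.sqrt t ≤ 2 * Real.sqrt T := by
  induction T with
  | zero => simp
  | succ n ih =>
    rw [Finset.sum_Icc_succ_top (by omega)]
    have h1 : Real.sqrt n ≤ Real.sqrt ((n + 1 : ℕ) : ℝ) := Real.sqrt_le_sqrt (by push_cast; linarith)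
    have h0 : 0 < Real.sqrt ((n + 1 : ℕ) : ℝ) := Real.sqrt_pos.mpr (by positivity)
    have s1 := Real.sq_sqrt (show (0:ℝ) ≤ n by positivity)
    have s2 := Real.sq_sqrt (show (0:ℝ) ≤ ((n + 1 : ℕ) : ℝ) by positivity)
    have s3 := Real.sqrt_nonneg (n : ℝ)
    have : 1 / Real.sqrt ((n + 1 : ℕ) : ℝ) ≤
        2 * (Real.sqrt ((n + 1 : ℕ) : ℝ) - Real.sqrt n) := by
      rw [div_le_iff₀ h0]
      push_cast at *
      nlinarith
    linarith

lemma aux_ker {d : ℕ} (g : ℕ → Fin d → ℝ) (B : ℕ → Matrix (Fin d) (Fin d) ℝ)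
    (hB : ∀ t, B t = ∑ s ∈ Finset.Icc 1 t, vecMulVec (g s) (g s)) (t : ℕ) (v : Fin d → ℝ) :
    B t *ᵥ v = 0 ↔ ∀ s ∈ Finset.Icc 1 t, g s ⬝ᵥ v = 0 := by
  constructor
  · intro h
    have h2 : v ⬝ᵥ B t *ᵥ v = 0 := by rw [h, dotProduct_zero]
    rw [hB, aux_quad1, Finset.sum_eq_zero_iff_of_nonneg (fun s _ => mul_self_nonneg _)] at h2
    exact fun s hs => mul_self_eq_zero.mp (h2 s hs)
  · intro h
    rw [hB, aux_mulVec1]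
    exact Finset.sum_eq_zero fun s hs => by rw [h s hs, zero_smul]

lemma aux_ker_le {d : ℕ} (g : ℕ → Fin d → ℝ) (B : ℕ → Matrix (Fin d) (Fin d) ℝ)
    (hB : ∀ t, B t = ∑ s ∈ Finset.Icc 1 t, vecMulVec (g s) (g s)) {s t : ℕ} (hst : s ≤ t) :
    LinearMap.ker (B t).mulVecLin ≤ LinearMap.ker (B s).mulVecLin := by
  intro v hv
  rw [LinearMap.mem_ker, mulVecLin_apply, aux_ker g B hB] at hv ⊢
  intro i hi
  exact hv i (by simp at hi ⊢; omega)

lemma aux_rank {d : ℕ} (M : Matrix (Fin d) (Fin d) ℝ) :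
    M.rank + Module.finrank ℝ (LinearMap.ker M.mulVecLin) = d := by
  have := LinearMap.finrank_range_add_finrank_ker M.mulVecLin
  simpa [Matrix.rank] using this

lemma aux_rank_mono {d : ℕ} (g : ℕ → Fin d → ℝ) (B : ℕ → Matrix (Fin d) (Fin d) ℝ)
    (hB : ∀ t, B t = ∑ s ∈ Finset.Icc 1 t, vecMulVec (g s) (g s)) {s t : ℕ} (hst : s ≤ t) :
    (B s).rank ≤ (B t).rank := by
  have h := Submodule.finrank_mono (aux_ker_le g B hB hst)
  have h1 := aux_rank (B s)
  have h2 := aux_rank (B t)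
  omega

lemma aux_ker_eq {d : ℕ} (g : ℕ → Fin d → ℝ) (B : ℕ → Matrix (Fin d) (Fin d) ℝ)
    (hB : ∀ t, B t = ∑ s ∈ Finset.Icc 1 t, vecMulVec (g s) (g s)) {s t : ℕ} (hst : s ≤ t)
    (hr : (B s).rank = (B t).rank) (v : Fin d → ℝ) (hv : B s *ᵥ v = 0) : B t *ᵥ v = 0 := by
  have h1 := aux_rank (B s)
  have h2 := aux_rank (B t)
  have := Submodule.eq_of_le_of_finrank_eq (aux_ker_le g B hB hst) (by omega)
  have hm : v ∈ LinearMap.ker (B t).mulVecLin := by rw [this]; exact hv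
  exact hm

/-- Projection onto the complement. -/
lemma aux_N {d : ℕ} (g : ℕ → Fin d → ℝ) (S : Finset ℕ) (e : ℕ → ℝ) (he : ∀ s ∈ S, 0 < e s)
    (A P : Matrix (Fin d) (Fin d) ℝ)
    (hA : A = ∑ s ∈ S, e s • vecMulVec (g s) (g s))
    (h1 : A * P * A = A) (h2 : (A * P)ᵀ = A * P) :
    (1 - A * P)ᵀ = 1 - A * P ∧ (1 - A * P) * (1 - A * P) = 1 - A * P ∧
    (∀ s ∈ S, (1 - A * P) *ᵥ g s = 0) ∧
    (∀ v, (∀ s ∈ S, g s ⬝ᵥ v = 0) → (1 - A * P) *ᵥ v = 0 → v = 0) := by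
  have hAT : Aᵀ = A := by
    rw [hA, transpose_sum]
    exact Finset.sum_congr rfl fun s _ => by rw [transpose_smul, transpose_vecMulVec]
  have hNT : (1 - A * P)ᵀ = 1 - A * P := by rw [transpose_sub, h2, transpose_one]
  have hNA : (1 - A * P) * A = 0 := by rw [Matrix.sub_mul, h1, Matrix.one_mul, sub_self]
  have hNq : ∀ v v', v ⬝ᵥ (1 - A * P) *ᵥ v' = ((1 - A * P) *ᵥ v) ⬝ᵥ v' := by
    intro v v'
    rw [dotProduct_mulVec, ← mulVec_transpose, hNT]
  refine ⟨hNT, ?_, ?_, ?_⟩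
  · rw [Matrix.mul_sub, Matrix.mul_one, ← Matrix.mul_assoc, hNA, Matrix.zero_mul, sub_zero]
  · intro s hs
    set z := (1 - A * P) *ᵥ g s with hz
    have h0 : z ⬝ᵥ A *ᵥ z = 0 := by
      have : z ⬝ᵥ A *ᵥ z = g s ⬝ᵥ ((1 - A * P) * A) *ᵥ z := by
        rw [← mulVec_mulVec, hNq]
      rw [this, hNA, zero_mulVec, dotProduct_zero]
    rw [hA, aux_quad, Finset.sum_eq_zero_iff_of_nonneg
      (fun i hi => mul_nonneg (he i hi).le (mul_self_nonneg _))] at h0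
    have h4 : g s ⬝ᵥ z = 0 := by
      have := (mul_eq_zero.mp (h0 s hs)).resolve_left (he s hs).ne'
      exact mul_self_eq_zero.mp this
    have h5 : z ⬝ᵥ z = 0 := by
      have hNN : (1 - A * P) *ᵥ z = z := by
        rw [hz, mulVec_mulVec, Matrix.mul_sub, Matrix.mul_one, ← Matrix.mul_assoc, hNA,
          Matrix.zero_mul, sub_zero]
      rw [← h4]
      conv_rhs => rw [← hNN, hNq, ← hz]
    exact dotProduct_self_eq_zero.mp h5
  · intro v hv hN
    have hAv : A *ᵥ v = 0 := by
      rw [hA, aux_mulVec]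
      exact Finset.sum_eq_zero fun s hs => by rw [hv s hs, mul_zero, zero_smul]
    have : (A * P) *ᵥ v = 0 := by
      rw [← h2, transpose_mul, hAT, ← mulVec_mulVec, hAv, mulVec_zero]
    rw [sub_mulVec, this, one_mulVec, sub_zero] at hN
    exact hN

lemma aux_sumq {d : ℕ} (T : ℕ) (g : ℕ → Fin d → ℝ) (B : ℕ → Matrix (Fin d) (Fin d) ℝ)
    (hB : ∀ t, B t = ∑ s ∈ Finset.Icc 1 t, vecMulVec (g s) (g s))
    (hT : 1 ≤ T) (hg1 : g 1 ≠ 0)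
    (hN : ∀ a ∈ Finset.Icc 1 T, ∃ N : Matrix (Fin d) (Fin d) ℝ, Nᵀ = N ∧ N * N = N ∧
      (∀ s ∈ Finset.Icc 1 a, N *ᵥ g s = 0) ∧
      (∀ v, (∀ s ∈ Finset.Icc 1 a, g s ⬝ᵥ v = 0) → N *ᵥ v = 0 → v = 0))
    (lam : ℝ) (hl : 0 < lam)
    (hgap : ∀ a ∈ Finset.Icc 1 T, ∀ v, lam * (v ⬝ᵥ B a *ᵥ v) ≤ (B a *ᵥ v) ⬝ᵥ (B a *ᵥ v))
    (q : ℕ → ℝ) (hq : ∀ t ∈ Finset.Icc 1 T, ∀ m, B t *ᵥ m = g t → q t ≤ g t ⬝ᵥ m)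
    (hq1 : ∀ t ∈ Finset.Icc 1 T, q t ≤ 1) (r : ℕ) (hr : r = (B T).rank) :
    ∑ t ∈ Finset.Icc 1 T, q t ≤ (r : ℝ) + (1 + (r : ℝ)) * r / 2 *
            Real.log (1 + 2 * (∑ t ∈ Finset.Icc 1 T, g t ⬝ᵥ g t)
              / ((1 + (r : ℝ)) * r * lam)) := by
  have hgg : ∀ t, 0 ≤ g t ⬝ᵥ g t := fun t => Finset.sum_nonneg fun i _ => mul_self_nonneg _
  have hrank1 : ∀ t ∈ Finset.Icc 1 T, (B t).rank ∈ Finset.Icc 1 r := by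
    intro t ht
    simp only [Finset.mem_Icc] at ht ⊢
    refine ⟨?_, ?_⟩
    · by_contra hcon
      have h0 : (B t).rank = 0 := by omega
      have h0' : B t = 0 := by
        have h1 := aux_rank (B t)
        have h3 : LinearMap.ker (B t).mulVecLin = ⊤ :=
          Submodule.eq_top_of_finrank_eq (by simp; omega)
        have h4 : B t *ᵥ g 1 = 0 := by
          have : g 1 ∈ LinearMap.ker (B t).mulVecLin := by rw [h3]; trivial
          exact this
        rw [aux_ker g B hB] at h4
        have := h4 1 (by simp; omega)
        exact absurd (dotProduct_self_eq_zero.mp this) hg1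
      have h4 : B t *ᵥ g 1 = 0 := by rw [h0', zero_mulVec]
      rw [aux_ker g B hB] at h4
      exact hg1 (dotProduct_self_eq_zero.mp (h4 1 (by simp; omega)))
    · rw [hr]; exact aux_rank_mono g B hB ht.2
  have hrpos : 1 ≤ r := by
    have := hrank1 1 (by simp; omega)
    simp at this; omega
  have hrR : (1 : ℝ) ≤ r := by exact_mod_cast hrpos
  set G := ∑ t ∈ Finset.Icc 1 T, g t ⬝ᵥ g t with hG
  have hG0 : 0 ≤ G := Finset.sum_nonneg fun t _ => hgg t
  set c := 2 * G / ((1 + (r : ℝ)) * r * lam) with hc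
  have hc0 : 0 ≤ c := by positivity
  have hθ := aux_theta hc0
  set θ := Real.log (1 + c) - c / (1 + c) with hθd
  have hstage : ∀ k ∈ Finset.Icc 1 r,
      ∑ t ∈ Finset.Icc 1 T with (B t).rank = k, q t ≤
        1 + k * θ + (∑ t ∈ Finset.Icc 1 T with (B t).rank = k, g t ⬝ᵥ g t) / lam / (1 + c) := by
    intro k hk
    set I := (Finset.Icc 1 T).filter (fun t => (B t).rank = k) with hI
    rcases I.eq_empty_or_nonempty with he | hne
    · rw [he]; simp only [Finset.sum_empty, zero_div, add_zero]; positivity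
    · set a := I.min' hne with ha
      set b := I.max' hne with hb
      have haI : a ∈ I := I.min'_mem hne
      have hbI : b ∈ I := I.max'_mem hne
      have hab : a ≤ b := I.min'_le b hbI
      have haI' := haI
      have hbI' := hbI
      simp only [hI, Finset.mem_filter, Finset.mem_Icc] at haI' hbI'
      have hIeq : I = Finset.Icc a b := by
        ext t
        simp only [Finset.mem_Icc]
        constructor
        · intro h; exact ⟨I.min'_le t h, I.le_max' t h⟩
        · rintro ⟨h1, h2⟩
          simp only [hI, Finset.mem_filter, Finset.mem_Icc]
          refine ⟨by omega, ?_⟩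
          have l1 := aux_rank_mono g B hB h1
          have l2 := aux_rank_mono g B hB h2
          omega
      obtain ⟨N, n1, n2, n3, n4⟩ := hN a (by simp; omega)
      have hNg : ∀ s ∈ Finset.Icc 1 b, N *ᵥ g s = 0 := by
        intro s hs
        have hz : g s ⬝ᵥ N *ᵥ (g s) = 0 := by
          have h1 : B a *ᵥ (N *ᵥ g s) = 0 := by
            rw [aux_ker g B hB]
            intro i hi
            rw [dotProduct_mulVec, ← mulVec_transpose, n1, n3 i hi, zero_dotProduct]
          have h2 := aux_ker_eq g B hB hab (by omega) _ h1
          rw [aux_ker g B hB] at h2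
          exact h2 s hs
        rw [← n2, ← mulVec_mulVec, dotProduct_mulVec, ← mulVec_transpose, n1] at hz
        exact dotProduct_self_eq_zero.mp hz
      have hs := aux_stage g N B hB n1 n2 a b hab hNg n4 lam hl (hgap a (by simp; omega)) q
        (fun t ht => hq t (by simp at ht ⊢; omega)) c hc0
      have hsplit : ∀ f : ℕ → ℝ, ∑ t ∈ I, f t = f a + ∑ t ∈ Finset.Ioc a b, f t := by
        intro f
        rw [hIeq, Finset.Icc_eq_cons_Ioc hab, Finset.sum_cons]
      rw [hsplit q, hsplit (fun t => g t ⬝ᵥ g t)]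
      have l1 := hq1 a (by simp; omega)
      have l2 : (∑ t ∈ Finset.Ioc a b, g t ⬝ᵥ g t) / lam / (1 + c) ≤
          (g a ⬝ᵥ g a + ∑ t ∈ Finset.Ioc a b, g t ⬝ᵥ g t) / lam / (1 + c) := by
        have := hgg a
        gcongr
        linarith
      rw [haI'.2] at hs
      linarith
  rw [← Finset.sum_fiberwise_of_maps_to hrank1]
  refine (Finset.sum_le_sum hstage).trans ?_
  rw [Finset.sum_add_distrib, Finset.sum_add_distrib, ← Finset.sum_div, ← Finset.sum_div,
    ← Finset.sum_mul, Finset.sum_fiberwise_of_maps_to hrank1, ← hG]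
  have hgauss : ∑ k ∈ Finset.Icc 1 r, (k : ℝ) = (1 + (r : ℝ)) * r / 2 := by
    clear_value c
    clear * -
    induction r with
    | zero => simp
    | succ n ih => rw [Finset.sum_Icc_succ_top (by omega), ih]; push_cast; ring
  rw [hgauss]
  have hGc : G / lam = (1 + (r : ℝ)) * r / 2 * c := by
    rw [hc]; field_simp
  rw [hGc, hθd]
  simp only [Finset.sum_const, Nat.card_Icc, nsmul_eq_mul, mul_one, Nat.add_sub_cancel]
  apply le_of_eq
  ring

/-- **Corollary (invariant algorithm, convex case).** The truly invariant online Newton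
algorithm: `A_t = Σ_{s≤t}(σ_s+η_s) g_s g_sᵀ`, `u_{t+1} = w_t − A_t† g_t`,
`w_{t+1} = argmin_{w∈K_{t+1}} ‖w−u_{t+1}‖_{A_t}`, with `σ_t = 0` and
`η_t = (1/(CL))√(d/t)`. With `λ*` the minimum of the smallest nonzero eigenvalues of
`Â_t = Σ_{s≤t} g_s g_sᵀ` and `r = rank(Â_T)`, for every `w ∈ K`:
`R_T(w) ≤ (CL/2)√(T/d)(r + ((1+r)r/2) ln(1 + 2Σ‖g_t‖₂²/((1+r)rλ*))) + 4CL√(Td)`. -/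
theorem invariant_newton_convex_case
    (d T : ℕ) (C L : ℝ) (hC : 0 < C) (hL : 0 < L)
    (x : ℕ → Fin d → ℝ) (ℓ : ℕ → ℝ → ℝ) (σ η : ℕ → ℝ)
    (hconv : ∀ t ∈ Finset.Icc 1 T, ConvexOn ℝ Set.univ (ℓ t))
    (hdiff : ∀ t ∈ Finset.Icc 1 T, Differentiable ℝ (ℓ t))
    -- Scalar Lipschitz assumption
    (hLip : ∀ t ∈ Finset.Icc 1 T, ∀ z : ℝ, |z| ≤ C → |deriv (ℓ t) z| ≤ L)
    (hσ : ∀ t ∈ Finset.Icc 1 T, σ t = 0)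
    (hηdef : ∀ t ∈ Finset.Icc 1 T, η t = 1 / (C * L) * Real.sqrt ((d : ℝ) / t))
    (K : Set (Fin d → ℝ))
    (hK : K = {v : Fin d → ℝ | ∀ t ∈ Finset.Icc 1 T, |v ⬝ᵥ x t| ≤ C})
    (f : ℕ → (Fin d → ℝ) → ℝ)
    (hf : ∀ t, ∀ v : Fin d → ℝ, f t v = ℓ t (v ⬝ᵥ x t))
    (w u g : ℕ → Fin d → ℝ)
    (hg : ∀ t, g t = deriv (ℓ t) (w t ⬝ᵥ x t) • x t)
    (hgne : ∀ t ∈ Finset.Icc 1 T, g t ≠ 0)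
    -- Curvature assumption
    (hcurv : ∀ t ∈ Finset.Icc 1 T, ∀ p ∈ K, ∀ q ∈ K,
      f t p + (deriv (ℓ t) (p ⬝ᵥ x t) • x t) ⬝ᵥ (q - p)
        + σ t / 2 * ((deriv (ℓ t) (p ⬝ᵥ x t) • x t) ⬝ᵥ (p - q)) ^ 2 ≤ f t q)
    (A : ℕ → Matrix (Fin d) (Fin d) ℝ)
    (hA : ∀ t, A t = ∑ s ∈ Finset.Icc 1 t, (σ s + η s) • Matrix.vecMulVec (g s) (g s))
    -- Moore–Penrose pseudoinverses of A_t
    (P : ℕ → Matrix (Fin d) (Fin d) ℝ)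
    (hP : ∀ t ∈ Finset.Icc 1 T,
      A t * P t * A t = A t ∧ P t * A t * P t = P t ∧
      (A t * P t)ᵀ = A t * P t ∧ (P t * A t)ᵀ = P t * A t)
    -- iterates
    (hw1 : w 1 = 0)
    (hu : ∀ t ∈ Finset.Icc 1 T, u (t + 1) = w t - (P t).mulVec (g t))
    (hproj : ∀ t ∈ Finset.Icc 1 T,
      |w (t + 1) ⬝ᵥ x (t + 1)| ≤ C ∧
      ∀ v : Fin d → ℝ, |v ⬝ᵥ x (t + 1)| ≤ C →
        Real.sqrt ((w (t + 1) - u (t + 1)) ⬝ᵥ (A t).mulVec (w (t + 1) - u (t + 1))) ≤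
          Real.sqrt ((v - u (t + 1)) ⬝ᵥ (A t).mulVec (v - u (t + 1))))
    -- λ* and r
    (Ahat : ℕ → Matrix (Fin d) (Fin d) ℝ)
    (hAhat : ∀ t, Ahat t = ∑ s ∈ Finset.Icc 1 t, Matrix.vecMulVec (g s) (g s))
    (hHerm : ∀ t, (Ahat t).IsHermitian)
    (lam : ℝ) (hlam : 0 < lam)
    (hlamlb : ∀ t ∈ Finset.Icc 1 T, ∀ i : Fin d,
      (hHerm t).eigenvalues i ≠ 0 → lam ≤ (hHerm t).eigenvalues i)
    (hlammin : ∃ t ∈ Finset.Icc 1 T, ∃ i : Fin d, (hHerm t).eigenvalues i = lam)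
    (r : ℕ) (hr : r = (Ahat T).rank) :
    ∀ wc ∈ K,
      ∑ t ∈ Finset.Icc 1 T, (f t (w t) - f t wc) ≤
        C * L / 2 * Real.sqrt ((T : ℝ) / d) *
          ((r : ℝ) + (1 + (r : ℝ)) * r / 2 *
            Real.log (1 + 2 * (∑ t ∈ Finset.Icc 1 T, g t ⬝ᵥ g t)
              / ((1 + (r : ℝ)) * r * lam)))
        + 4 * C * L * Real.sqrt ((T : ℝ) * d) := by
  intro wc hwc
  obtain ⟨t0, ht0, i0, -⟩ := hlammin
  have hT : 1 ≤ T := by simp at ht0; omega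
  have hd : 0 < d := i0.pos
  have hdR : (0 : ℝ) < d := by exact_mod_cast hd
  have hTR : (0 : ℝ) < T := by exact_mod_cast hT
  have hη0 : ∀ t ∈ Finset.Icc 1 T, 0 < η t := by
    intro t ht
    have : (0 : ℝ) < t := by simp at ht; exact_mod_cast (by omega : 0 < t)
    rw [hηdef t ht]; positivity
  have hηT : ∀ t ∈ Finset.Icc 1 T, η T ≤ η t := by
    intro t ht
    have h1 : (0 : ℝ) < t := by simp at ht; exact_mod_cast (by omega : 0 < t)
    have h2 : (t : ℝ) ≤ T := by simp at ht; exact_mod_cast ht.2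
    rw [hηdef t ht, hηdef T (by simp; omega)]
    gcongr
  have hA' : ∀ t ≤ T, A t = ∑ s ∈ Finset.Icc 1 t, η s • vecMulVec (g s) (g s) := by
    intro t ht
    rw [hA]
    refine Finset.sum_congr rfl fun s hs => ?_
    rw [hσ s (by simp at hs ⊢; omega), zero_add]
  have hAq : ∀ t ≤ T, ∀ v v', v ⬝ᵥ A t *ᵥ v' =
      ∑ s ∈ Finset.Icc 1 t, η s * ((g s ⬝ᵥ v) * (g s ⬝ᵥ v')) := by
    intro t ht v v'; rw [hA' t ht, aux_quad]
  have hApos : ∀ t ≤ T, ∀ v, 0 ≤ v ⬝ᵥ A t *ᵥ v := by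
    intro t ht v
    rw [hAq t ht]
    exact Finset.sum_nonneg fun s hs =>
      mul_nonneg (hη0 s (by simp at hs ⊢; omega)).le (mul_self_nonneg _)
  have hAT : ∀ t ≤ T, (A t)ᵀ = A t := by
    intro t ht
    rw [hA' t ht, transpose_sum]
    exact Finset.sum_congr rfl fun s _ => by rw [transpose_smul, transpose_vecMulVec]
  have hN := fun t (ht : t ∈ Finset.Icc 1 T) =>
    aux_N g (Finset.Icc 1 t) η (fun s hs => hη0 s (by simp at hs ht ⊢; omega)) (A t) (P t)
      (hA' t (by simp at ht; omega)) (hP t ht).1 (hP t ht).2.2.1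
  have hAy : ∀ t ∈ Finset.Icc 1 T, A t *ᵥ (P t *ᵥ g t) = g t := by
    intro t ht
    have := (hN t ht).2.2.1 t (by simp at ht ⊢; omega)
    rw [sub_mulVec, one_mulVec, sub_eq_zero] at this
    rw [mulVec_mulVec]; exact this.symm
  have hwC : ∀ t ∈ Finset.Icc 1 T, |w t ⬝ᵥ x t| ≤ C := by
    intro t ht
    simp at ht
    rcases Nat.eq_or_lt_of_le ht.1 with h | h
    · rw [← h, hw1, zero_dotProduct, abs_zero]; exact hC.le
    · have := (hproj (t - 1) (by simp; omega)).1
      rwa [Nat.sub_add_cancel ht.1] at this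
  have hwcC : ∀ t ∈ Finset.Icc 1 T, |wc ⬝ᵥ x t| ≤ C := by
    rw [hK] at hwc; exact hwc
  -- linearization
  have hlin : ∀ t ∈ Finset.Icc 1 T, f t (w t) - f t wc ≤ g t ⬝ᵥ (w t - wc) := by
    intro t ht
    rw [hf, hf, hg, smul_dotProduct, smul_eq_mul, dotProduct_sub, dotProduct_comm (x t),
      dotProduct_comm (x t)]
    set p := w t ⬝ᵥ x t
    set z := wc ⬝ᵥ x t
    have hd := (hdiff t ht p).hasDerivAt
    have hcv := hconv t ht
    rcases lt_trichotomy p z with h | h | h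
    · have := hcv.le_slope_of_hasDerivAt (Set.mem_univ p) (Set.mem_univ z) h hd
      rw [slope_def_field, le_div_iff₀ (by linarith)] at this
      linarith
    · rw [h]; simp
    · have := hcv.slope_le_of_hasDerivAt (Set.mem_univ z) (Set.mem_univ p) h hd
      rw [slope_def_field, div_le_iff₀ (by linarith)] at this
      linarith
  have hsq : ∀ t ∈ Finset.Icc 1 T, (g t ⬝ᵥ (w t - wc)) ^ 2 ≤ 4 * C ^ 2 * L ^ 2 := by
    intro t ht
    rw [hg, smul_dotProduct, smul_eq_mul, dotProduct_sub, dotProduct_comm (x t),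
      dotProduct_comm (x t), mul_pow]
    have h1 := hwC t ht
    have h2 := hwcC t ht
    have h3 := hLip t ht _ h1
    have h4 : (deriv (ℓ t) (w t ⬝ᵥ x t)) ^ 2 ≤ L ^ 2 := sq_le_sq' (abs_le.mp h3).1 (abs_le.mp h3).2
    have h5 : (w t ⬝ᵥ x t - wc ⬝ᵥ x t) ^ 2 ≤ (2 * C) ^ 2 := by
      rw [abs_le] at h1 h2
      apply sq_le_sq' <;> linarith
    calc _ ≤ L ^ 2 * (2 * C) ^ 2 := by gcongr
      _ = _ := by ring
  -- telescoping
  have htel : ∀ n ≤ T, ∑ t ∈ Finset.Icc 1 n,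
      (2 * (g t ⬝ᵥ (w t - wc)) - g t ⬝ᵥ P t *ᵥ g t - η t * (g t ⬝ᵥ (w t - wc)) ^ 2)
      ≤ - ((u (n + 1) - wc) ⬝ᵥ A n *ᵥ (u (n + 1) - wc)) := by
    intro n
    induction n with
    | zero => intro _; rw [hAq 0 (by omega)]; simp
    | succ n ih =>
      intro hn
      have ih' := ih (by omega)
      have hmem : n + 1 ∈ Finset.Icc 1 T := by simp; omega
      rw [Finset.sum_Icc_succ_top (by omega)]
      set D := w (n + 1) - wc with hD
      set y := P (n + 1) *ᵥ g (n + 1) with hy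
      have hAyn : A (n + 1) *ᵥ y = g (n + 1) := hAy _ hmem
      have e1 : u (n + 1 + 1) - wc = D - y := by rw [hu _ hmem, hD]; abel
      have e2 : (D - y) ⬝ᵥ A (n + 1) *ᵥ (D - y) =
          D ⬝ᵥ A (n + 1) *ᵥ D - 2 * (g (n + 1) ⬝ᵥ D) + g (n + 1) ⬝ᵥ y := by
        have : y ⬝ᵥ A (n + 1) *ᵥ D = g (n + 1) ⬝ᵥ D := by
          rw [dotProduct_mulVec, ← mulVec_transpose, hAT _ hn, hAyn]
        rw [mulVec_sub, dotProduct_sub, sub_dotProduct D y, sub_dotProduct D y, this, hAyn,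
          dotProduct_comm D (g _), dotProduct_comm y (g _)]
        ring
      have e3 : D ⬝ᵥ A (n + 1) *ᵥ D = D ⬝ᵥ A n *ᵥ D + η (n + 1) * (g (n + 1) ⬝ᵥ D) ^ 2 := by
        rw [hAq _ hn, hAq n (by omega), Finset.sum_Icc_succ_top (by omega)]
        ring
      have e4 : D ⬝ᵥ A n *ᵥ D ≤ (u (n + 1) - wc) ⬝ᵥ A n *ᵥ (u (n + 1) - wc) := by
        rcases Nat.eq_zero_or_pos n with h0 | h0
        · subst h0
          rw [hAq 0 (by omega), hAq 0 (by omega)]; simp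
        · apply aux_proj (A n) (hAT n (by omega)) (hApos n (by omega))
          intro ε hε0 hε1
          have hpr := hproj n (by simp; omega)
          apply hpr.2
          have h1 := hpr.1
          have h2 := hwcC _ hmem
          have e : (w (n + 1) + ε • (wc - w (n + 1))) ⬝ᵥ x (n + 1)
            = (1 - ε) * (w (n + 1) ⬝ᵥ x (n + 1)) + ε * (wc ⬝ᵥ x (n + 1)) := by
            rw [add_dotProduct, smul_dotProduct, sub_dotProduct, smul_eq_mul]; ring
          rw [e]
          rw [abs_le] at h1 h2 ⊢
          constructor <;> nlinarith
      rw [e1, e2]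
      linarith
  have hreg := (htel T le_rfl).trans (neg_nonpos.mpr (hApos T le_rfl _))
  rw [Finset.sum_sub_distrib, Finset.sum_sub_distrib, ← Finset.mul_sum] at hreg
  -- second-order term
  have hTmem : T ∈ Finset.Icc 1 T := by simp; omega
  have hsecond : ∑ t ∈ Finset.Icc 1 T, η t * (g t ⬝ᵥ (w t - wc)) ^ 2 ≤
      8 * C * L * Real.sqrt (T * d) := by
    calc _ ≤ ∑ t ∈ Finset.Icc 1 T, 4 * C * L * Real.sqrt d * (1 / Real.sqrt t) := by
          refine Finset.sum_le_sum fun t ht => ?_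
          calc _ ≤ η t * (4 * C ^ 2 * L ^ 2) :=
                mul_le_mul_of_nonneg_left (hsq t ht) (hη0 t ht).le
            _ = _ := by
              rw [hηdef t ht, Real.sqrt_div hdR.le]
              field_simp
      _ = 4 * C * L * Real.sqrt d * ∑ t ∈ Finset.Icc 1 T, (1 / Real.sqrt t) := by
          rw [Finset.mul_sum]
      _ ≤ 4 * C * L * Real.sqrt d * (2 * Real.sqrt T) :=
          mul_le_mul_of_nonneg_left (aux_sqrt T) (by positivity)
      _ = _ := by rw [Real.sqrt_mul hTR.le]; ring
  -- first-order term
  have hηTpos := hη0 T hTmem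
  have hkey : ∀ t ∈ Finset.Icc 1 T, ∃ z : Fin d → ℝ,
      η T * (g t ⬝ᵥ P t *ᵥ g t) = g t ⬝ᵥ z ∧ z ⬝ᵥ Ahat t *ᵥ z ≤ g t ⬝ᵥ z := by
    intro t ht
    have htT : t ≤ T := by simp at ht; omega
    refine ⟨η T • (P t *ᵥ g t), by rw [dotProduct_smul, smul_eq_mul], ?_⟩
    have e1 : g t ⬝ᵥ P t *ᵥ g t = (P t *ᵥ g t) ⬝ᵥ A t *ᵥ (P t *ᵥ g t) := by
      rw [hAy t ht, dotProduct_comm]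
    rw [dotProduct_smul, e1, mulVec_smul, dotProduct_smul, smul_dotProduct, smul_eq_mul,
      smul_eq_mul, smul_eq_mul]
    apply mul_le_mul_of_nonneg_left _ hηTpos.le
    rw [hAhat, aux_quad1, hAq t htT, Finset.mul_sum]
    refine Finset.sum_le_sum fun s hs => ?_
    exact mul_le_mul_of_nonneg_right (hηT s (by simp at hs ⊢; omega)) (mul_self_nonneg _)
  have hfirst := aux_sumq T g Ahat hAhat hT (hgne 1 (by simp; omega))
    (fun a ha => ⟨1 - A a * P a, hN a ha⟩) lam hlam
    (fun a ha v => aux_gap (Ahat a) (hHerm a) lam hlam (hlamlb a ha) v)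
    (fun t => η T * (g t ⬝ᵥ P t *ᵥ g t))
    (by
      intro t ht m hm
      obtain ⟨z, hz1, hz2⟩ := hkey t ht
      simp only [hz1]
      have h0 : 0 ≤ (z - m) ⬝ᵥ Ahat t *ᵥ (z - m) := by
        rw [hAhat, aux_quad1]; exact Finset.sum_nonneg fun s _ => mul_self_nonneg _
      have hsym : m ⬝ᵥ Ahat t *ᵥ z = g t ⬝ᵥ z := by
        rw [← hm, hAhat, aux_quad1, dotProduct_comm, aux_quad1]
        exact Finset.sum_congr rfl fun s _ => by ring
      rw [mulVec_sub, dotProduct_sub, sub_dotProduct, sub_dotProduct, hsym, hm,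
        dotProduct_comm z (g t), dotProduct_comm m (g t)] at h0
      linarith)
    (by
      intro t ht
      obtain ⟨z, hz1, hz2⟩ := hkey t ht
      simp only [hz1]
      have h1 : (g t ⬝ᵥ z) * (g t ⬝ᵥ z) ≤ z ⬝ᵥ Ahat t *ᵥ z := by
        rw [hAhat, aux_quad1]
        exact Finset.single_le_sum (f := fun s => (g s ⬝ᵥ z) * (g s ⬝ᵥ z))
          (fun s _ => mul_self_nonneg _) (by simp at ht ⊢; omega)
      nlinarith [sq_nonneg (g t ⬝ᵥ z - 1)])
    r hr
  rw [← Finset.mul_sum] at hfirst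
  set X := (r : ℝ) + (1 + (r : ℝ)) * r / 2 * Real.log (1 + 2 * (∑ t ∈ Finset.Icc 1 T, g t ⬝ᵥ g t)
              / ((1 + (r : ℝ)) * r * lam)) with hX
  have hinv : C * L * Real.sqrt ((T : ℝ) / d) * η T = 1 := by
    rw [hηdef T hTmem, Real.sqrt_div hTR.le, Real.sqrt_div hdR.le]
    have := Real.sqrt_pos.mpr hTR
    have := Real.sqrt_pos.mpr hdR
    field_simp
  have hfirst2 : ∑ t ∈ Finset.Icc 1 T, g t ⬝ᵥ P t *ᵥ g t ≤ C * L * Real.sqrt ((T : ℝ) / d) * X := by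
    calc _ = C * L * Real.sqrt ((T : ℝ) / d) * (η T * ∑ t ∈ Finset.Icc 1 T, g t ⬝ᵥ P t *ᵥ g t) := by
          rw [← mul_assoc, hinv, one_mul]
      _ ≤ _ := mul_le_mul_of_nonneg_left hfirst (by positivity)
  have hsum := Finset.sum_le_sum hlin
  linarith
end

section
/- Let x, u, w ∈ R^d, y ∈ R and C > 0 satisfy |u^⊤ x| ≤ C, |w^⊤ x| ≤ C and |y| ≤ C. Define f(v) = (v^⊤ x − y)² for v ∈ R^d, so that ∇f(u) = 2(u^⊤ x − y)·x. Then f(w) ≥ f(u) + ∇f(u)^⊤ (w − u) + (1/(16C²))·(∇f(u)^⊤ (u − w))². In other words, the squared loss satisfies the Curvature assumption with σ = 1/(8C²). -/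
open Matrix

/-- **Squared loss satisfies the curvature assumption with `σ = 1/(8C²)`.** For
`|uᵀx| ≤ C`, `|wᵀx| ≤ C`, `|y| ≤ C`, the function `f(v) = (vᵀx − y)²`, whose gradient at
`u` is `2(uᵀx − y)·x`, satisfies
`f(w) ≥ f(u) + ∇f(u)ᵀ(w−u) + (1/(16C²))(∇f(u)ᵀ(u−w))²`. -/
theorem squared_loss_curvature
    (d : ℕ) (x u w : Fin d → ℝ) (y C : ℝ) (hC : 0 < C)
    (hu : |u ⬝ᵥ x| ≤ C) (hw : |w ⬝ᵥ x| ≤ C) (hy : |y| ≤ C)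
    (f : (Fin d → ℝ) → ℝ) (hf : ∀ v : Fin d → ℝ, f v = (v ⬝ᵥ x - y) ^ 2) :
    f u + (2 * (u ⬝ᵥ x - y)) • x ⬝ᵥ (w - u)
        + 1 / (16 * C ^ 2) * ((2 * (u ⬝ᵥ x - y)) • x ⬝ᵥ (u - w)) ^ 2 ≤ f w := by
  rw [hf, hf, smul_dotProduct, smul_dotProduct, dotProduct_sub, dotProduct_sub,
    dotProduct_comm x w, dotProduct_comm x u]
  generalize u ⬝ᵥ x = a at *
  generalize w ⬝ᵥ x = b at *
  simp only [smul_eq_mul]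
  have h1 := abs_le.mp hu
  have h2 := abs_le.mp hy
  have h3 : (a - y) ^ 2 ≤ 4 * C ^ 2 := by nlinarith
  have h4 : 1 / (16 * C ^ 2) * (2 * (a - y) * (a - b)) ^ 2 ≤ (a - b) ^ 2 := by
    rw [one_div, inv_mul_le_iff₀ (by positivity)]
    nlinarith [mul_le_mul_of_nonneg_right h3 (sq_nonneg (a - b))]
  nlinarith
end

section
/- Let α > 0 and g_1, ..., g_T ∈ R^d, and define A_0 = α I_d and A_t = A_{t−1} + g_t g_t^⊤ for t = 1,...,T (so each A_t is positive definite). Then Σ_{t=1}^T g_t^⊤ A_t^{−1} g_t ≤ ln( det(A_T) / det(A_0) ) = Σ_{i=1}^d ln(1 + λ_i(Σ_{t=1}^T g_t g_t^⊤)/α) ≤ d · ln(1 + Σ_{t=1}^T ‖g_t‖₂² / (dα)). -/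
open Matrix Finset

lemma step_bound {d : ℕ} (B : Matrix (Fin d) (Fin d) ℝ) (hB : B.PosDef) (v : Fin d → ℝ) :
    v ⬝ᵥ (B + vecMulVec v v)⁻¹.mulVec v ≤ Real.log (B + vecMulVec v v).det - Real.log B.det := by
  have hv : (vecMulVec v v).PosSemidef := by
    simpa using posSemidef_vecMulVec_self_star v
  have hC : (B + vecMulVec v v).PosDef := hB.add_posSemidef hv
  set C := B + vecMulVec v v with hCdef
  have hB' : B = C + replicateCol Unit (-v) * replicateRow Unit v := by
    rw [← vecMulVec_eq, neg_vecMulVec, hCdef]; abel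
  have hdet : B.det = C.det * (1 - v ⬝ᵥ C⁻¹.mulVec v) := by
    have h := det_add_replicateCol_mul_replicateRow (ι := Unit) (A := C) hC.det_pos.ne'.isUnit (-v) v
    rw [← hB'] at h
    rw [h]
    congr 1
    simp [Matrix.det_unique, Matrix.mul_apply, dotProduct, mulVec, Finset.mul_sum, Finset.sum_mul]
    rw [sub_eq_add_neg]
    congr 2
    rw [Finset.sum_comm]
    simp only [mul_assoc]
  have h1 : 0 < 1 - v ⬝ᵥ C⁻¹.mulVec v := by
    have := hB.det_pos
    rw [hdet] at this
    exact (pos_iff_pos_of_mul_pos this).1 hC.det_pos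
  rw [hdet, Real.log_mul hC.det_pos.ne' h1.ne']
  have := Real.log_le_sub_one_of_pos h1
  linarith

theorem log_det_bound
    (d T : ℕ) (α : ℝ) (hα : 0 < α) (g : ℕ → Fin d → ℝ)
    (A : ℕ → Matrix (Fin d) (Fin d) ℝ)
    (hA0 : A 0 = α • (1 : Matrix (Fin d) (Fin d) ℝ))
    (hAt : ∀ t ∈ Finset.Icc 1 T, A t = A (t - 1) + Matrix.vecMulVec (g t) (g t))
    (M : Matrix (Fin d) (Fin d) ℝ)
    (hMdef : M = ∑ t ∈ Finset.Icc 1 T, Matrix.vecMulVec (g t) (g t))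
    (hM : M.IsHermitian) :
    ∑ t ∈ Finset.Icc 1 T, g t ⬝ᵥ (A t)⁻¹.mulVec (g t) ≤
        Real.log ((A T).det / (A 0).det) ∧
    Real.log ((A T).det / (A 0).det) = ∑ i : Fin d, Real.log (1 + hM.eigenvalues i / α) ∧
    ∑ i : Fin d, Real.log (1 + hM.eigenvalues i / α) ≤
      (d : ℝ) * Real.log (1 + (∑ t ∈ Finset.Icc 1 T, g t ⬝ᵥ g t) / (d * α)) := by
  have h0 : (A 0).PosDef := by
    rw [hA0]; exact Matrix.PosDef.one.smul hα
  have hps : ∀ v : Fin d → ℝ, (vecMulVec v v).PosSemidef := fun v => by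
    simpa using posSemidef_vecMulVec_self_star v
  have key : ∀ n ≤ T, (A n).PosDef ∧
      A n = A 0 + ∑ t ∈ Finset.Icc 1 n, Matrix.vecMulVec (g t) (g t) ∧
      ∑ t ∈ Finset.Icc 1 n, g t ⬝ᵥ (A t)⁻¹.mulVec (g t) ≤
        Real.log (A n).det - Real.log (A 0).det := by
    intro n
    induction n with
    | zero => intro _; simp [h0]
    | succ k ih =>
      intro hk
      obtain ⟨h1, h2, h3⟩ := ih (by omega)
      have hs : A (k+1) = A k + vecMulVec (g (k+1)) (g (k+1)) := by
        simpa using hAt (k+1) (by simp; omega)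
      refine ⟨?_, ?_, ?_⟩
      · rw [hs]; exact h1.add_posSemidef (hps _)
      · rw [Finset.sum_Icc_succ_top (by omega), ← add_assoc, ← h2, hs]
      · rw [Finset.sum_Icc_succ_top (by omega)]
        have := step_bound (A k) h1 (g (k+1))
        rw [← hs] at this
        linarith
  obtain ⟨hT, hTM, hle⟩ := key T le_rfl
  rw [← hMdef, hA0] at hTM
  have hMps : M.PosSemidef := by
    rw [hMdef]; exact Matrix.posSemidef_sum _ (fun t _ => hps _)
  have hev : ∀ i, 0 ≤ hM.eigenvalues i := hMps.eigenvalues_nonneg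
  have hpos : ∀ i, 0 < 1 + hM.eigenvalues i / α := fun i => by
    have := div_nonneg (hev i) hα.le
    linarith
  have hdet : (A T).det / (A 0).det = ∏ i, (1 + hM.eigenvalues i / α) := by
    have h1 : (A T).det = ∏ i, (α + hM.eigenvalues i) := by
      have h := congrArg (Polynomial.eval (-α)) hM.charpoly_eq
      rw [Matrix.eval_charpoly, Polynomial.eval_prod] at h
      have h2 : A T = -(Matrix.scalar (Fin d) (-α) - M) := by
        rw [hTM]; ext i j; simp [Matrix.one_apply, Matrix.diagonal_apply]; split_ifs <;> ring
      rw [h2, det_neg, h, ← Finset.card_univ, ← Finset.prod_const, ← Finset.prod_mul_distrib]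
      refine Finset.prod_congr rfl fun i _ => ?_
      simp; ring
    have h3 : (A 0).det = ∏ i : Fin d, α := by simp [hA0]
    rw [h1, h3, ← Finset.prod_div_distrib]
    refine Finset.prod_congr rfl fun i _ => ?_
    field_simp
  refine ⟨?_, ?_, ?_⟩
  · rw [Real.log_div hT.det_pos.ne' h0.det_pos.ne']; exact hle
  · rw [hdet, Real.log_prod (fun i _ => (hpos i).ne')]
  · rcases Nat.eq_zero_or_pos d with rfl | hd
    · simp
    have hd' : (0:ℝ) < d := by exact_mod_cast hd
    have htr : ∑ t ∈ Finset.Icc 1 T, g t ⬝ᵥ g t = ∑ i, hM.eigenvalues i := by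
      have := hM.trace_eq_sum_eigenvalues
      simp only [RCLike.ofReal_real_eq_id, id] at this
      rw [← this, hMdef, Matrix.trace_sum]
      simp
    have hj := strictConcaveOn_log_Ioi.concaveOn.le_map_sum (t := Finset.univ)
      (w := fun _ : Fin d => (1:ℝ)/d) (p := fun i => 1 + hM.eigenvalues i / α)
      (fun _ _ => by positivity) (by simp; field_simp) (fun i _ => hpos i)
    simp only [smul_eq_mul, ← Finset.mul_sum] at hj
    have he : (1:ℝ)/d * ∑ i, (1 + hM.eigenvalues i / α) = 1 + (∑ i, hM.eigenvalues i) / (d*α) := by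
      rw [Finset.sum_add_distrib, ← Finset.sum_div]
      simp; field_simp
    rw [he] at hj
    rw [htr]
    rw [one_div, inv_mul_le_iff₀ hd'] at hj
    exact hj
end
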